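/- arXiv:2207.08172 — 6 statements merged into one kernel-verified Lean document; each statement's English description precedes it below -/
import Mathlib

section
/- For every δ > 0 the partial products f^N converge, as N → ∞, uniformly on Ω_δ = {z ∈ ℂ : dist(z, 𝒞(a,b)) ≥ δ} to a limit function f_{a,b}; in particular the infinite product f_{a,b}(z) = ((z − b_0)/(z − a_0)) ∏_{i=1}^∞ (z − a_i)/(z − b_i) converges at every point of ℂ ∖ 𝒞(a,b) and defines a holomorphic (complex differentiable) function on ℂ ∖ 𝒞(a,b). -/
open Filter Topology

/-- The Cantor-type set 𝒞(a,b) = [a₀,b₀] ∖ ⋃_{i≥1} (aᵢ,bᵢ), viewed as a subset of ℂ. -/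
noncomputable def cantorAB (a b : ℕ → ℝ) : Set ℂ :=
  (fun x : ℝ => (x : ℂ)) '' (Set.Icc (a 0) (b 0) \ ⋃ i : ℕ, Set.Ioo (a (i + 1)) (b (i + 1)))

/-- The partial product f^N(z) = ((z−b₀)/(z−a₀)) ∏_{i=1}^N (z−aᵢ)/(z−bᵢ). -/
noncomputable def partialProd (a b : ℕ → ℝ) (N : ℕ) (z : ℂ) : ℂ :=
  ((z - (b 0 : ℂ)) / (z - (a 0 : ℂ))) *
    ∏ i ∈ Finset.Icc 1 N, ((z - (a i : ℂ)) / (z - (b i : ℂ)))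

/-- A product `∏ (1 + g i x)` whose terms are dominated by a summable sequence converges uniformly,
on an arbitrary set. -/
lemma tendstoUniformlyOn_prod_range_one_add {α : Type*} {g : ℕ → α → ℂ} {u : ℕ → ℝ} {s : Set α}
    (hu : Summable u) (hg : ∀ n, ∀ x ∈ s, ‖g n x‖ ≤ u n) :
    TendstoUniformlyOn (fun N x => ∏ i ∈ Finset.range N, (1 + g i x))
      (fun x => ∏' i, (1 + g i x)) atTop s := by
  rcases s.eq_empty_or_nonempty with rfl | ⟨x₀, hx₀⟩
  · exact tendstoUniformlyOn_empty
  have hu0 : ∀ n, 0 ≤ u n := fun n => (norm_nonneg _).trans (hg n x₀ hx₀)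
  have hprod : ∀ N, ∀ x ∈ s,
      ‖∏ i ∈ Finset.range N, (1 + g i x)‖ ≤ Real.exp (∑' i, u i) := fun N x hx =>
    calc ‖∏ i ∈ Finset.range N, (1 + g i x)‖
        ≤ ∏ i ∈ Finset.range N, (1 + u i) := by
          rw [norm_prod]
          refine Finset.prod_le_prod (fun _ _ => norm_nonneg _) fun i _ => ?_
          refine (norm_add_le _ _).trans ?_
          rw [norm_one]
          gcongr
          exact hg i x hx
      _ ≤ Real.exp (∑ i ∈ Finset.range N, u i) := Real.prod_one_add_le_exp_sum _ hu0
      _ ≤ Real.exp (∑' i, u i) := by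
          gcongr
          exact hu.sum_le_tsum _ fun i _ => hu0 i
  have hsum : TendstoUniformlyOn (fun N x => ∏ i ∈ Finset.range N, (1 + g i x))
      (fun x => 1 + ∑' n, (∏ i ∈ Finset.range n, (1 + g i x)) * g n x) atTop s := by
    have h := tendstoUniformlyOn_tsum_nat (hu.mul_left (Real.exp (∑' i, u i))) (s := s)
      (f := fun n x => (∏ i ∈ Finset.range n, (1 + g i x)) * g n x) fun n x hx => by
        rw [norm_mul]
        exact mul_le_mul (hprod n x hx) (hg n x hx) (norm_nonneg _) (Real.exp_nonneg _)
    rw [Metric.tendstoUniformlyOn_iff] at h ⊢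
    intro ε hε
    filter_upwards [h ε hε] with N hN x hx
    have htel : ∏ i ∈ Finset.range N, (1 + g i x)
        = 1 + ∑ n ∈ Finset.range N, (∏ i ∈ Finset.range n, (1 + g i x)) * g n x := by
      clear hN
      induction N with
      | zero => simp
      | succ N ih =>
        rw [Finset.sum_range_succ, ← add_assoc, ← ih, Finset.prod_range_succ, mul_add, mul_one]
    rw [htel, dist_add_left]
    exact hN x hx
  refine hsum.congr_right fun x hx => ?_
  have hmul : Multipliable fun i => 1 + g i x :=
    multipliable_one_add_of_summable
      (hu.of_nonneg_of_le (fun _ => norm_nonneg _) fun n => hg n x hx)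
  exact tendsto_nhds_unique (hsum.tendsto_at hx) hmul.hasProd.tendsto_prod_nat

/-- Disjoint closed intervals contained in a common bounded interval have summable lengths. -/
lemma summable_length_of_disjoint_Icc {a b : ℕ → ℝ} {c d : ℝ} (hab : ∀ i, a i ≤ b i)
    (hsub : ∀ i, Set.Icc (a i) (b i) ⊆ Set.Icc c d)
    (hdisj : Pairwise (Function.onFun Disjoint fun i => Set.Icc (a i) (b i))) :
    Summable fun i => b i - a i := by
  have h := MeasureTheory.summable_measure_toReal
    (μ := MeasureTheory.volume.restrict (Set.Icc c d)) (fun i => measurableSet_Icc) hdisj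
  refine h.congr fun i => ?_
  rw [MeasureTheory.measureReal_restrict_apply measurableSet_Icc,
    Set.inter_eq_left.mpr (hsub i), Real.volume_real_Icc_of_le (hab i)]

lemma isClosed_cantorAB (a b : ℕ → ℝ) : IsClosed (cantorAB a b) :=
  Complex.isometry_ofReal.isClosedEmbedding.isClosedMap _
    (isClosed_Icc.sdiff (isOpen_iUnion fun _ => isOpen_Ioo))

lemma left_mem_cantorAB {a b : ℕ → ℝ} (hab : ∀ j, a j < b j)
    (hsub : ∀ i, 1 ≤ i → Set.Icc (a i) (b i) ⊆ Set.Ioo (a 0) (b 0)) :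
    (a 0 : ℂ) ∈ cantorAB a b := by
  refine ⟨a 0, ⟨⟨le_rfl, (hab 0).le⟩, ?_⟩, rfl⟩
  simp only [Set.mem_iUnion, not_exists]
  intro i hi
  exact (hsub (i + 1) (by omega) (Set.Ioo_subset_Icc_self hi)).1.false

lemma right_mem_cantorAB {a b : ℕ → ℝ} (hab : ∀ j, a j < b j)
    (hsub : ∀ i, 1 ≤ i → Set.Icc (a i) (b i) ⊆ Set.Ioo (a 0) (b 0))
    (hdisj : ∀ i k, 1 ≤ i → 1 ≤ k → i ≠ k →
      Disjoint (Set.Icc (a i) (b i)) (Set.Icc (a k) (b k))) {i : ℕ} (hi : 1 ≤ i) :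
    (b i : ℂ) ∈ cantorAB a b := by
  have hbi : b i ∈ Set.Icc (a i) (b i) := Set.right_mem_Icc.mpr (hab i).le
  refine ⟨b i, ⟨Set.Ioo_subset_Icc_self (hsub i hi hbi), ?_⟩, rfl⟩
  simp only [Set.mem_iUnion, not_exists]
  intro k hk
  rcases eq_or_ne i (k + 1) with rfl | hne
  · exact hk.2.false
  · exact Set.disjoint_left.mp (hdisj i (k + 1) hi (by omega) hne) hbi
      (Set.Ioo_subset_Icc_self hk)

/-- The `i`-th factor of `partialProd`, minus one. -/
noncomputable def factorSubOne (a b : ℕ → ℝ) : ℕ → ℂ → ℂ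
  | 0, z => -((b 0 - a 0 : ℝ) : ℂ) / (z - a 0)
  | i + 1, z => ((b (i + 1) - a (i + 1) : ℝ) : ℂ) / (z - b (i + 1))

lemma partialProd_eq_prod_range {a b : ℕ → ℝ} {z : ℂ} (h0 : z ≠ a 0)
    (hb : ∀ i, 1 ≤ i → z ≠ b i) (N : ℕ) :
    partialProd a b N z = ∏ i ∈ Finset.range (N + 1), (1 + factorSubOne a b i z) := by
  rw [Finset.prod_range_succ', partialProd, mul_comm, Finset.range_eq_Ico,
    Finset.prod_Ico_add' (fun i => 1 + factorSubOne a b i z) 0 N 1]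
  congr 1
  · refine Finset.prod_congr (by ext; simp) fun i hi => ?_
    obtain ⟨k, rfl⟩ : ∃ k, i = k + 1 := ⟨i - 1, by have := (Finset.mem_Icc.mp hi).1; omega⟩
    have := sub_ne_zero.mpr (hb (k + 1) (by omega))
    simp only [factorSubOne]
    push_cast
    field_simp
    ring
  · have := sub_ne_zero.mpr h0
    simp only [factorSubOne]
    push_cast
    field_simp
    ring

lemma norm_factorSubOne_le {a b : ℕ → ℝ} (hab : ∀ j, a j < b j)
    (hsub : ∀ i, 1 ≤ i → Set.Icc (a i) (b i) ⊆ Set.Ioo (a 0) (b 0))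
    (hdisj : ∀ i k, 1 ≤ i → 1 ≤ k → i ≠ k →
      Disjoint (Set.Icc (a i) (b i)) (Set.Icc (a k) (b k))) {δ : ℝ} (hδ : 0 < δ) {z : ℂ}
    (hz : δ ≤ Metric.infDist z (cantorAB a b)) (i : ℕ) :
    ‖factorSubOne a b i z‖ ≤ (b i - a i) / δ := by
  have hle : ∀ w ∈ cantorAB a b, δ ≤ ‖z - w‖ := fun w hw => by
    rw [← dist_eq_norm]
    exact hz.trans (Metric.infDist_le_dist_of_mem hw)
  have hnonneg : 0 ≤ b i - a i := sub_nonneg.mpr (hab i).le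
  cases i with
  | zero =>
    rw [factorSubOne, norm_div, norm_neg, Complex.norm_of_nonneg hnonneg]
    exact div_le_div_of_nonneg_left hnonneg hδ (hle _ (left_mem_cantorAB hab hsub))
  | succ i =>
    rw [factorSubOne, norm_div, Complex.norm_of_nonneg hnonneg]
    exact div_le_div_of_nonneg_left hnonneg hδ
      (hle _ (right_mem_cantorAB hab hsub hdisj (by omega)))

/-- the partial products f^N converge uniformly on each
Ω_δ = {z : dist(z, 𝒞(a,b)) ≥ δ} (δ > 0) to a limit f_{a,b}; in particular the infinite
product converges at every point of ℂ ∖ 𝒞(a,b) and defines a holomorphic function there. -/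
theorem stmt0 (a b : ℕ → ℝ)
    (hab : ∀ j, a j < b j)
    (hsub : ∀ i, 1 ≤ i → Set.Icc (a i) (b i) ⊆ Set.Ioo (a 0) (b 0))
    (hdisj : ∀ i k, 1 ≤ i → 1 ≤ k → i ≠ k →
      Disjoint (Set.Icc (a i) (b i)) (Set.Icc (a k) (b k))) :
    ∃ f : ℂ → ℂ,
      (∀ δ : ℝ, 0 < δ →
        TendstoUniformlyOn (partialProd a b) f atTop
          {z : ℂ | δ ≤ Metric.infDist z (cantorAB a b)}) ∧
      (∀ z ∉ cantorAB a b,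
        Tendsto (fun N => partialProd a b N z) atTop (𝓝 (f z))) ∧
      DifferentiableOn ℂ f (cantorAB a b)ᶜ := by
  have ha0 := left_mem_cantorAB hab hsub
  have hbi := fun i (hi : 1 ≤ i) => right_mem_cantorAB hab hsub hdisj hi
  have hclosed := isClosed_cantorAB a b
  have hpos : ∀ z ∉ cantorAB a b, 0 < Metric.infDist z (cantorAB a b) := fun z hz =>
    (hclosed.notMem_iff_infDist_pos ⟨_, ha0⟩).mp hz
  have hlength : Summable fun i => b i - a i := by
    rw [← summable_nat_add_iff 1]
    exact summable_length_of_disjoint_Icc (fun i => (hab (i + 1)).le)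
      (fun i => (hsub (i + 1) (by omega)).trans Set.Ioo_subset_Icc_self)
      fun i k hik => hdisj (i + 1) (k + 1) (by omega) (by omega) (by omega)
  have hunif : ∀ δ : ℝ, 0 < δ → TendstoUniformlyOn (partialProd a b)
      (fun z => ∏' i, (1 + factorSubOne a b i z)) atTop
      {z : ℂ | δ ≤ Metric.infDist z (cantorAB a b)} := by
    intro δ hδ
    have h := tendstoUniformlyOn_prod_range_one_add (hlength.div_const δ)
      fun i z (hz : z ∈ {z : ℂ | δ ≤ Metric.infDist z (cantorAB a b)}) =>
        norm_factorSubOne_le hab hsub hdisj hδ hz i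
    intro v hv
    filter_upwards [(tendsto_add_atTop_nat 1).eventually (h v hv)] with N hN z hz
    have hne : ∀ w ∈ cantorAB a b, z ≠ w := by
      rintro w hw rfl
      exact (hδ.trans_le hz).ne' (Metric.infDist_zero_of_mem hw)
    rw [partialProd_eq_prod_range (hne _ ha0) fun i hi => hne _ (hbi i hi)]
    exact hN z hz
  refine ⟨_, hunif, fun z hz => (hunif _ (hpos z hz)).tendsto_at (le_refl (Metric.infDist z _)), ?_⟩
  have hloc : TendstoLocallyUniformlyOn (partialProd a b)
      (fun z => ∏' i, (1 + factorSubOne a b i z)) atTop (cantorAB a b)ᶜ := by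
    refine tendstoLocallyUniformlyOn_of_forall_exists_nhds fun z hz =>
      ⟨_, mem_nhdsWithin_of_mem_nhds ?_, hunif _ (half_pos (hpos z hz))⟩
    exact (Metric.continuous_infDist_pt _).continuousAt.eventually
      (Ici_mem_nhds (half_lt_self (hpos z hz)))
  refine hloc.differentiableOn (Eventually.of_forall fun N => ?_) hclosed.isOpen_compl
  intro z hz
  have hne : ∀ w ∈ cantorAB a b, z - w ≠ 0 := fun w hw =>
    sub_ne_zero.mpr fun h => hz (h ▸ hw)
  refine DifferentiableAt.differentiableWithinAt ?_
  unfold partialProd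
  refine DifferentiableAt.mul ?_ (DifferentiableAt.fun_finsetProd fun i hi => ?_)
  · exact DifferentiableAt.fun_div (by fun_prop) (by fun_prop) (hne _ ha0)
  · exact DifferentiableAt.fun_div (by fun_prop) (by fun_prop)
      (hne _ (hbi i (Finset.mem_Icc.mp hi).1))
end

section
/- f_{a,b}(z) → 1 as |z| → ∞; more precisely, the function h defined by h(w) = f_{a,b}(1/w) for 0 < |w| < 1/max(|a_0|, |b_0|) and h(0) = 1 is holomorphic on the disc {w ∈ ℂ : |w| < 1/max(|a_0|, |b_0|)} (i.e. f_{a,b} extends holomorphically across the point at infinity with value 1). -/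
open Filter Topology

/-- The total length of finitely many disjoint subintervals is at most the length of the
ambient interval. -/
theorem sum_length_le_of_disjoint {ι : Type*} (s : Finset ι) (a b : ι → ℝ) {A B : ℝ}
    (hAB : A ≤ B) (hab : ∀ i ∈ s, a i ≤ b i)
    (hsub : ∀ i ∈ s, Set.Icc (a i) (b i) ⊆ Set.Icc A B)
    (hdisj : (s : Set ι).PairwiseDisjoint fun i => Set.Icc (a i) (b i)) :
    ∑ i ∈ s, (b i - a i) ≤ B - A := by
  calc ∑ i ∈ s, (b i - a i)
      = ∑ i ∈ s, MeasureTheory.volume.real (Set.Icc (a i) (b i)) :=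
        Finset.sum_congr rfl fun i hi => (Real.volume_real_Icc_of_le (hab i hi)).symm
    _ = MeasureTheory.volume.real (⋃ i ∈ s, Set.Icc (a i) (b i)) :=
        (MeasureTheory.measureReal_biUnion_finset hdisj (fun i _ => measurableSet_Icc)
          fun i _ => measure_Icc_lt_top.ne).symm
    _ ≤ MeasureTheory.volume.real (Set.Icc A B) :=
        MeasureTheory.measureReal_mono (Set.iUnion₂_subset hsub) measure_Icc_lt_top.ne
    _ = B - A := Real.volume_real_Icc_of_le hAB

/-- A factor `(z - p) / (z - q)` equals `1 + (q - p) / (z - q)`, and the second summand is small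
far away from `q`. -/
theorem norm_div_sub_one_le {z : ℂ} {p q M : ℝ} (hq : |q| ≤ M) (hz : M < ‖z‖) :
    ‖(z - p) / (z - q) - 1‖ ≤ |q - p| / (‖z‖ - M) := by
  have hlow : ‖z‖ - M ≤ ‖z - q‖ := by
    have h := norm_sub_norm_le z (q : ℂ)
    rw [Complex.norm_real, Real.norm_eq_abs] at h
    linarith
  have hne : z - q ≠ 0 := norm_pos_iff.mp (by linarith)
  have heq : (z - p) / (z - q) - 1 = ((q - p : ℝ) : ℂ) / (z - q) := by
    push_cast
    field_simp
    ring
  rw [heq, norm_div, Complex.norm_real, Real.norm_eq_abs]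
  have : 0 < ‖z‖ - M := by linarith
  gcongr

/-- Points of modulus larger than both endpoints lie outside the Cantor-type set. -/
theorem notMem_cantorAB_of_max_lt_norm {a b : ℕ → ℝ} {z : ℂ} (hz : max |a 0| |b 0| < ‖z‖) :
    z ∉ cantorAB a b := by
  rintro ⟨x, ⟨hx, -⟩, rfl⟩
  rw [Complex.norm_real, Real.norm_eq_abs] at hz
  exact absurd (abs_le_max_abs_abs hx.1 hx.2) (not_le.mpr hz)

/-- The partial products are uniformly close to `1` far away from the Cantor-type set. -/
theorem norm_partialProd_sub_one_le {a b : ℕ → ℝ} (hab : ∀ j, a j < b j)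
    (hsub : ∀ i, 1 ≤ i → Set.Icc (a i) (b i) ⊆ Set.Ioo (a 0) (b 0))
    (hdisj : ∀ i k, 1 ≤ i → 1 ≤ k → i ≠ k →
      Disjoint (Set.Icc (a i) (b i)) (Set.Icc (a k) (b k)))
    {z : ℂ} (hz : max |a 0| |b 0| < ‖z‖) (N : ℕ) :
    ‖partialProd a b N z - 1‖ ≤
      Real.exp (2 * (b 0 - a 0) / (‖z‖ - max |a 0| |b 0|)) - 1 := by
  set M := max |a 0| |b 0|
  have hpos : 0 < ‖z‖ - M := by linarith
  have hlen : ∑ i ∈ Finset.Icc 1 N, (b i - a i) ≤ b 0 - a 0 := by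
    refine sum_length_le_of_disjoint _ a b (hab 0).le (fun i _ => (hab i).le)
      (fun i hi => (hsub i (Finset.mem_Icc.mp hi).1).trans Set.Ioo_subset_Icc_self) ?_
    intro i hi k hk hik
    exact hdisj i k (Finset.mem_Icc.mp hi).1 (Finset.mem_Icc.mp hk).1 hik
  let u : ℕ → ℂ := fun i =>
    if i = 0 then (z - b 0) / (z - a 0) - 1 else (z - a i) / (z - b i) - 1
  have hprod : partialProd a b N z = ∏ i ∈ insert 0 (Finset.Icc 1 N), (1 + u i) := by
    rw [Finset.prod_insert (by simp), partialProd]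
    congr 1
    · simp [u]
    · refine Finset.prod_congr rfl fun i hi => ?_
      have : i ≠ 0 := by have := (Finset.mem_Icc.mp hi).1; omega
      simp [u, this]
  have hu : ∑ i ∈ insert 0 (Finset.Icc 1 N), ‖u i‖ ≤ 2 * (b 0 - a 0) / (‖z‖ - M) := by
    rw [Finset.sum_insert (by simp)]
    have h0 : ‖u 0‖ ≤ (b 0 - a 0) / (‖z‖ - M) := by
      have h := norm_div_sub_one_le (p := b 0) (le_max_left |a 0| |b 0|) hz
      rw [abs_sub_comm, abs_of_pos (sub_pos.mpr (hab 0))] at h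
      simpa [u] using h
    have hi : ∑ i ∈ Finset.Icc 1 N, ‖u i‖ ≤ (b 0 - a 0) / (‖z‖ - M) := by
      calc ∑ i ∈ Finset.Icc 1 N, ‖u i‖
          ≤ ∑ i ∈ Finset.Icc 1 N, (b i - a i) / (‖z‖ - M) := by
            refine Finset.sum_le_sum fun i hi => ?_
            have h1 := (Finset.mem_Icc.mp hi).1
            have hi0 : i ≠ 0 := by omega
            have hmem := hsub i h1 (Set.right_mem_Icc.mpr (hab i).le)
            have h := norm_div_sub_one_le (p := a i)
              (abs_le_max_abs_abs hmem.1.le hmem.2.le) hz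
            rw [abs_of_pos (sub_pos.mpr (hab i))] at h
            simpa [u, hi0] using h
        _ = (∑ i ∈ Finset.Icc 1 N, (b i - a i)) / (‖z‖ - M) := (Finset.sum_div _ _ _).symm
        _ ≤ (b 0 - a 0) / (‖z‖ - M) := by gcongr
    calc _ ≤ _ := add_le_add h0 hi
      _ = _ := by ring
  rw [hprod]
  exact (Finset.norm_prod_one_add_sub_one_le _ u).trans (by gcongr)

/-- f_{a,b}(z) → 1 as |z| → ∞; more precisely, the function
h(w) = f_{a,b}(1/w) (w ≠ 0), h(0) = 1, is holomorphic on the disc of radius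
1/max(|a₀|,|b₀|) around 0, i.e. f_{a,b} extends holomorphically across ∞ with value 1. -/
theorem stmt1 (a b : ℕ → ℝ)
    (hab : ∀ j, a j < b j)
    (hsub : ∀ i, 1 ≤ i → Set.Icc (a i) (b i) ⊆ Set.Ioo (a 0) (b 0))
    (hdisj : ∀ i k, 1 ≤ i → 1 ≤ k → i ≠ k →
      Disjoint (Set.Icc (a i) (b i)) (Set.Icc (a k) (b k)))
    (f : ℂ → ℂ)
    (hf : ∀ z ∉ cantorAB a b,
      Tendsto (fun N => partialProd a b N z) atTop (𝓝 (f z)))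
    (hfdiff : DifferentiableOn ℂ f (cantorAB a b)ᶜ) :
    Tendsto f (Bornology.cobounded ℂ) (𝓝 1) ∧
    DifferentiableOn ℂ (fun w : ℂ => if w = 0 then 1 else f (1 / w))
      (Metric.ball 0 (1 / max |a 0| |b 0|)) := by
  have hfar : ∀ z : ℂ, max |a 0| |b 0| < ‖z‖ →
      ‖f z - 1‖ ≤ Real.exp (2 * (b 0 - a 0) / (‖z‖ - max |a 0| |b 0|)) - 1 := fun z hz =>
    le_of_tendsto ((hf z (notMem_cantorAB_of_max_lt_norm hz)).sub_const 1).norm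
      (Eventually.of_forall (norm_partialProd_sub_one_le hab hsub hdisj hz))
  have hM : 0 < max |a 0| |b 0| := by
    by_contra! h
    have ha := abs_nonpos_iff.mp ((le_max_left _ _).trans h)
    have hb := abs_nonpos_iff.mp ((le_max_right _ _).trans h)
    exact (hab 0).ne (ha.trans hb.symm)
  have hlim : Tendsto f (Bornology.cobounded ℂ) (𝓝 1) := by
    rw [tendsto_iff_norm_sub_tendsto_zero]
    have hbound : Tendsto
        (fun z : ℂ => Real.exp (2 * (b 0 - a 0) / (‖z‖ - max |a 0| |b 0|)) - 1)
        (Bornology.cobounded ℂ) (𝓝 0) := by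
      have h := (tendsto_atTop_add_const_right _ (-max |a 0| |b 0|)
        (tendsto_norm_cobounded_atTop (E := ℂ))).const_div_atTop (2 * (b 0 - a 0))
      simpa [sub_eq_add_neg] using ((Real.continuous_exp.tendsto 0).comp h).sub_const 1
    refine squeeze_zero' (Eventually.of_forall fun z => norm_nonneg _) ?_ hbound
    filter_upwards [tendsto_norm_cobounded_atTop.eventually_gt_atTop (max |a 0| |b 0|)] with z hz
    exact hfar z hz
  refine ⟨hlim, ?_⟩
  have hball : Metric.ball (0 : ℂ) (1 / max |a 0| |b 0|) ∈ 𝓝 0 :=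
    Metric.ball_mem_nhds _ (by positivity)
  refine (Complex.differentiableOn_compl_singleton_and_continuousAt_iff hball).mp ⟨?_, ?_⟩
  · have hcomp : DifferentiableOn ℂ (fun w : ℂ => f (1 / w))
        (Metric.ball 0 (1 / max |a 0| |b 0|) \ {0}) := by
      refine hfdiff.comp (t := (cantorAB a b)ᶜ) (g := f) ?_ ?_
      · exact (differentiableOn_const 1).div differentiableOn_id fun w hw => hw.2
      · intro w hw
        refine notMem_cantorAB_of_max_lt_norm ?_
        have hw0 : 0 < ‖w‖ := norm_pos_iff.mpr hw.2
        have hwlt : ‖w‖ < 1 / max |a 0| |b 0| := by simpa using hw.1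
        rw [norm_div, norm_one]
        exact (lt_one_div hw0 hM).mp hwlt
    exact hcomp.congr fun w hw => if_neg hw.2
  · rw [continuousAt_iff_punctured_nhds]
    have h : Tendsto (fun w : ℂ => f (1 / w)) (𝓝[≠] 0) (𝓝 1) := by
      simpa [Function.comp_def] using hlim.comp (tendsto_inv₀_nhdsNE_zero (α := ℂ))
    simp only [if_true]
    refine h.congr' ?_
    filter_upwards [self_mem_nhdsWithin] with w hw
    exact (if_neg hw).symm
end

section
/- For every N ≥ 1 there exists a unique holomorphic function g^N_+ on the open set D_N = ℂ ∖ ([a_0, b_0] ∖ ⋃_{j=1}^N (a_j, b_j)) such that (g^N_+(z))² = f^N(z) for all z ∈ D_N and g^N_+(z) → 1 as |z| → ∞; moreover g^N_− := −g^N_+ is the unique holomorphic function on D_N whose square is f^N and which tends to −1 as |z| → ∞. -/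
open Filter Topology

/-- D_N = ℂ ∖ ([a₀,b₀] ∖ ⋃_{j=1}^N (a_j,b_j)). -/
noncomputable def domDN (a b : ℕ → ℝ) (N : ℕ) : Set ℂ :=
  ((fun x : ℝ => (x : ℂ)) ''
    (Set.Icc (a 0) (b 0) \ ⋃ j ∈ Set.Icc 1 N, Set.Ioo (a j) (b j)))ᶜ

/-- The Möbius map `(z - q) / (z - p)`, which sends the segment `[p, q]` to the negative real axis. -/
noncomputable def moebiusRatio (p q : ℝ) (z : ℂ) : ℂ := (z - q) / (z - p)

lemma moebiusRatio_ne_zero {p q : ℝ} {z : ℂ} (hp : z ≠ p) (hq : z ≠ q) :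
    moebiusRatio p q z ≠ 0 :=
  div_ne_zero (sub_ne_zero.2 hq) (sub_ne_zero.2 hp)

lemma differentiableAt_moebiusRatio {p q : ℝ} {z : ℂ} (hp : z ≠ p) :
    DifferentiableAt ℂ (moebiusRatio p q) z := by
  unfold moebiusRatio
  exact (differentiableAt_id.sub_const _).div (differentiableAt_id.sub_const _) (sub_ne_zero.2 hp)

lemma moebiusRatio_im (p q : ℝ) (z : ℂ) :
    (moebiusRatio p q z).im = (q - p) * z.im / Complex.normSq (z - p) := by
  simp only [moebiusRatio, Complex.div_im, Complex.sub_re, Complex.sub_im, Complex.ofReal_re,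
    Complex.ofReal_im]
  ring

lemma moebiusRatio_ofReal (p q x : ℝ) : moebiusRatio p q x = ((x - q) / (x - p) : ℝ) := by
  simp [moebiusRatio]

lemma moebiusRatio_mem_slitPlane {p q : ℝ} (hpq : p < q) {z : ℂ}
    (hz : ∀ x ∈ Set.Icc p q, z ≠ (x : ℂ)) : moebiusRatio p q z ∈ Complex.slitPlane := by
  rw [Complex.mem_slitPlane_iff]
  by_cases him : z.im = 0
  · left
    obtain ⟨x, rfl⟩ : ∃ x : ℝ, z = x := ⟨z.re, Complex.ext rfl (by simpa using him)⟩
    rw [moebiusRatio_ofReal, Complex.ofReal_re]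
    have hx : ¬ (p ≤ x ∧ x ≤ q) := fun h => hz x h rfl
    rcases lt_or_ge x p with h | h
    · exact div_pos_of_neg_of_neg (by linarith) (by linarith)
    · have : q < x := by by_contra! h'; exact hx ⟨h, h'⟩
      exact div_pos (by linarith) (by linarith)
  · right
    rw [moebiusRatio_im]
    have : z - p ≠ 0 := fun h => him (by simpa using congrArg Complex.im h)
    exact div_ne_zero (mul_ne_zero (by linarith) him) (by simpa using this)

lemma tendsto_moebiusRatio (p q : ℝ) :
    Tendsto (moebiusRatio p q) (Bornology.cobounded ℂ) (𝓝 1) := by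
  have h1 : Tendsto (fun z : ℂ => 1 + (p - q) * (z - p)⁻¹) (Bornology.cobounded ℂ)
      (𝓝 (1 + (p - q) * 0)) := by
    refine tendsto_const_nhds.add (tendsto_const_nhds.mul ?_)
    exact tendsto_inv₀_cobounded.comp (tendsto_sub_const_cobounded (p : ℂ))
  rw [mul_zero, add_zero] at h1
  refine h1.congr' ?_
  filter_upwards [Bornology.eventually_ne_cobounded (p : ℂ)] with z hz
  have := sub_ne_zero.2 hz
  rw [moebiusRatio]
  field_simp
  ring

/-- The principal square root of a complex number. -/
noncomputable def principalSqrt (w : ℂ) : ℂ := w ^ ((2 : ℂ)⁻¹)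

lemma principalSqrt_sq (w : ℂ) : principalSqrt w ^ 2 = w :=
  Complex.cpow_ofNat_inv_pow w 2

lemma principalSqrt_ne_zero {w : ℂ} (hw : w ≠ 0) : principalSqrt w ≠ 0 := by
  intro h
  exact hw (by rw [← principalSqrt_sq w, h]; simp)

lemma differentiableAt_principalSqrt {w : ℂ} (hw : w ∈ Complex.slitPlane) :
    DifferentiableAt ℂ principalSqrt w :=
  differentiableAt_id.cpow_const hw

lemma principalSqrt_one : principalSqrt 1 = 1 := Complex.one_cpow _

/-- On each of the half planes `0 < im` and `im < 0`, passing from `w` to `-w` multiplies the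
principal square root by a constant; quotients of roots are therefore unaffected. -/
lemma principalSqrt_div_eq_neg {v w : ℂ} (hv : v ≠ 0) (hw : w ≠ 0)
    (h : (0 < v.im ∧ 0 < w.im) ∨ (v.im < 0 ∧ w.im < 0) ∨
      (v.im = 0 ∧ w.im = 0 ∧ v.re < 0 ∧ w.re < 0)) :
    principalSqrt v / principalSqrt w = principalSqrt (-v) / principalSqrt (-w) := by
  have key : ∀ u : ℂ, u ≠ 0 → ∀ c : ℂ, Complex.log u = Complex.log (-u) + c →
      principalSqrt u = principalSqrt (-u) * Complex.exp (c * 2⁻¹) := by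
    intro u hu c hc
    rw [principalSqrt, principalSqrt, Complex.cpow_def_of_ne_zero hu,
      Complex.cpow_def_of_ne_zero (neg_ne_zero.2 hu), ← Complex.exp_add, hc, add_mul]
  have fin : ∀ c : ℂ, Complex.log v = Complex.log (-v) + c → Complex.log w = Complex.log (-w) + c →
      principalSqrt v / principalSqrt w = principalSqrt (-v) / principalSqrt (-w) := by
    intro c h1 h2
    rw [key v hv c h1, key w hw c h2, mul_div_mul_right _ _ (Complex.exp_ne_zero _)]
  have up : ∀ u : ℂ, 0 < u.im ∨ (u.im = 0 ∧ u.re < 0) →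
      Complex.log u = Complex.log (-u) + Real.pi * Complex.I := by
    intro u hu
    have : Complex.arg (-u) = Complex.arg u - Real.pi :=
      Complex.arg_neg_eq_arg_sub_pi_iff.2 hu
    rw [Complex.log, Complex.log, norm_neg, this]
    push_cast
    ring
  have down : ∀ u : ℂ, u.im < 0 →
      Complex.log u = Complex.log (-u) + -(Real.pi * Complex.I) := by
    intro u hu
    have : Complex.arg (-u) = Complex.arg u + Real.pi :=
      Complex.arg_neg_eq_arg_add_pi_of_im_neg hu
    rw [Complex.log, Complex.log, norm_neg, this]
    push_cast
    ring
  rcases h with ⟨h1, h2⟩ | ⟨h1, h2⟩ | ⟨h1, h2, h3, h4⟩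
  · exact fin _ (up v (.inl h1)) (up w (.inl h2))
  · exact fin _ (down v h1) (down w h2)
  · exact fin _ (up v (.inr ⟨h1, h3⟩)) (up w (.inr ⟨h2, h4⟩))

/-- The principal root of `(z - q) / (z - p)`, with branch cut `[p, q]`. -/
noncomputable def sqrtRatio (p q : ℝ) (z : ℂ) : ℂ := principalSqrt (moebiusRatio p q z)

lemma differentiableAt_sqrtRatio {p q : ℝ} (hpq : p < q) {z : ℂ}
    (hz : ∀ x ∈ Set.Icc p q, z ≠ (x : ℂ)) : DifferentiableAt ℂ (sqrtRatio p q) z :=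
  (differentiableAt_principalSqrt (moebiusRatio_mem_slitPlane hpq hz)).comp z
    (differentiableAt_moebiusRatio (hz p (Set.left_mem_Icc.2 hpq.le)))

lemma sqrtRatio_ne_zero {p q : ℝ} {z : ℂ} (hp : z ≠ p) (hq : z ≠ q) : sqrtRatio p q z ≠ 0 :=
  principalSqrt_ne_zero (moebiusRatio_ne_zero hp hq)

lemma tendsto_sqrtRatio (p q : ℝ) :
    Tendsto (sqrtRatio p q) (Bornology.cobounded ℂ) (𝓝 1) := by
  have h := (differentiableAt_principalSqrt Complex.one_mem_slitPlane).continuousAt.tendsto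
  rw [principalSqrt_one] at h
  exact h.comp (tendsto_moebiusRatio p q)

lemma moebiusRatio_ofReal_neg {p q x : ℝ} (hx : x ∈ Set.Ioo p q) :
    (x - q) / (x - p) < 0 :=
  div_neg_of_neg_of_pos (by linarith [hx.2]) (by linarith [hx.1])

/-- The jumps of two nested roots across the inner segment cancel in their quotient. -/
lemma differentiableAt_sqrtRatio_div {p q r s x : ℝ} (hpq : x ∈ Set.Ioo p q)
    (hrs : x ∈ Set.Ioo r s) :
    DifferentiableAt ℂ (fun z => sqrtRatio p q z / sqrtRatio r s z) (x : ℂ) := by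
  have diff : ∀ {p q : ℝ}, x ∈ Set.Ioo p q →
      DifferentiableAt ℂ (fun z => principalSqrt (-moebiusRatio p q z)) (x : ℂ) ∧
        principalSqrt (-moebiusRatio p q x) ≠ 0 := by
    intro p q h
    have hm : -moebiusRatio p q x ∈ Complex.slitPlane := by
      rw [moebiusRatio_ofReal, ← Complex.ofReal_neg, Complex.ofReal_mem_slitPlane]
      linarith [moebiusRatio_ofReal_neg h]
    exact ⟨(differentiableAt_principalSqrt hm).fun_comp' (x : ℂ)
      (differentiableAt_moebiusRatio (by exact_mod_cast h.1.ne')).fun_neg,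
      principalSqrt_ne_zero (Complex.slitPlane_ne_zero hm)⟩
  refine ((diff hpq).1.div (diff hrs).1 (diff hrs).2).congr_of_eventuallyEq ?_
  have hnhds : ∀ᶠ z in 𝓝 (x : ℂ), z.re ∈ Set.Ioo p q ∩ Set.Ioo r s :=
    Complex.continuous_re.continuousAt.eventually_mem
      ((isOpen_Ioo.inter isOpen_Ioo).mem_nhds ⟨hpq, hrs⟩)
  filter_upwards [hnhds] with z hz
  have ne : ∀ y : ℝ, z.re ≠ y → z ≠ y := fun y hy h => hy (by rw [h, Complex.ofReal_re])
  have hzp := ne p hz.1.1.ne'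
  have hzr := ne r hz.2.1.ne'
  refine principalSqrt_div_eq_neg (moebiusRatio_ne_zero hzp (ne q hz.1.2.ne))
    (moebiusRatio_ne_zero hzr (ne s hz.2.2.ne)) ?_
  have hp' : 0 < Complex.normSq (z - p) := Complex.normSq_pos.2 (sub_ne_zero.2 hzp)
  have hr' : 0 < Complex.normSq (z - r) := Complex.normSq_pos.2 (sub_ne_zero.2 hzr)
  have hpq' : 0 < q - p := by linarith [hpq.1, hpq.2]
  have hrs' : 0 < s - r := by linarith [hrs.1, hrs.2]
  rw [moebiusRatio_im, moebiusRatio_im]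
  rcases lt_trichotomy z.im 0 with h | h | h
  · exact .inr (.inl ⟨div_neg_of_neg_of_pos (mul_neg_of_pos_of_neg hpq' h) hp',
      div_neg_of_neg_of_pos (mul_neg_of_pos_of_neg hrs' h) hr'⟩)
  · obtain ⟨y, rfl⟩ : ∃ y : ℝ, z = y := ⟨z.re, Complex.ext rfl (by simpa using h)⟩
    refine .inr (.inr ⟨by simp, by simp, ?_, ?_⟩)
    · rw [moebiusRatio_ofReal]
      exact moebiusRatio_ofReal_neg hz.1
    · rw [moebiusRatio_ofReal]
      exact moebiusRatio_ofReal_neg hz.2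
  · exact .inl ⟨by positivity, by positivity⟩

/-- The complement in `ℂ` of a bounded-above set of reals is preconnected. -/
lemma isPreconnected_compl_ofReal_image {K : Set ℝ} (hK : BddAbove K) :
    IsPreconnected ((fun x : ℝ => (x : ℂ)) '' K)ᶜ := by
  set D : Set ℂ := ((fun x : ℝ => (x : ℂ)) '' K)ᶜ
  have im_ne : ∀ z : ℂ, z.im ≠ 0 → z ∈ D := by
    rintro z hz ⟨x, -, rfl⟩
    exact hz (Complex.ofReal_im x)
  have up : IsPreconnected (D ∩ {z : ℂ | 0 ≤ z.im}) := by
    refine (convex_halfSpace_im_gt 0).isPreconnected.subset_closure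
      (fun z (hz : 0 < z.im) => ⟨im_ne z hz.ne', hz.le⟩) ?_
    rw [Complex.closure_setOfPred_lt_im]
    exact Set.inter_subset_right
  have down : IsPreconnected (D ∩ {z : ℂ | z.im ≤ 0}) := by
    refine (convex_halfSpace_im_lt 0).isPreconnected.subset_closure
      (fun z (hz : z.im < 0) => ⟨im_ne z hz.ne, hz.le⟩) ?_
    rw [Complex.closure_setOfPred_im_lt]
    exact Set.inter_subset_right
  obtain ⟨B, hB⟩ := hK
  have hx : ((B + 1 : ℝ) : ℂ) ∈ D := by
    rintro ⟨x, hx, hxe⟩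
    have := hB hx
    have : x = B + 1 := Complex.ofReal_injective hxe
    linarith
  have hcover : D = (D ∩ {z : ℂ | 0 ≤ z.im}) ∪ (D ∩ {z : ℂ | z.im ≤ 0}) := by
    rw [← Set.inter_union_distrib_left]
    exact (Set.inter_eq_left.2 fun z _ => le_total 0 z.im).symm
  rw [hcover]
  exact IsPreconnected.union' ⟨((B + 1 : ℝ) : ℂ), ⟨hx, (Complex.ofReal_im _).ge⟩,
    ⟨hx, (Complex.ofReal_im _).le⟩⟩ up down

lemma isPreconnected_domDN (a b : ℕ → ℝ) (N : ℕ) : IsPreconnected (domDN a b N) :=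
  isPreconnected_compl_ofReal_image (bddAbove_Icc.mono Set.sdiff_subset)

lemma eventually_mem_domDN (a b : ℕ → ℝ) (N : ℕ) :
    ∀ᶠ z in Bornology.cobounded ℂ, z ∈ domDN a b N := by
  have hb : Bornology.IsBounded ((fun x : ℝ => (x : ℂ)) ''
      (Set.Icc (a 0) (b 0) \ ⋃ j ∈ Set.Icc 1 N, Set.Ioo (a j) (b j))) :=
    (isCompact_Icc.image Complex.continuous_ofReal).isBounded.subset
      (Set.image_mono Set.sdiff_subset)
  exact hb

lemma mem_domDN_cases {a b : ℕ → ℝ} {N : ℕ} {z : ℂ} (hz : z ∈ domDN a b N) :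
    (∀ x ∈ Set.Icc (a 0) (b 0), z ≠ (x : ℂ)) ∨
      ∃ j ∈ Finset.Icc 1 N, ∃ x ∈ Set.Ioo (a j) (b j), z = (x : ℂ) := by
  by_contra! hcon
  obtain ⟨⟨x, hx, rfl⟩, h⟩ := hcon
  refine hz ⟨x, ⟨hx, ?_⟩, rfl⟩
  simp only [Set.mem_iUnion, not_exists]
  intro j hj hxj
  exact h j (Finset.mem_Icc.2 hj) x hxj rfl

/-- The square root of `partialProd` normalised to be `1` at infinity. -/
noncomputable def sqrtPartialProd (a b : ℕ → ℝ) (N : ℕ) (z : ℂ) : ℂ :=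
  sqrtRatio (a 0) (b 0) z / ∏ i ∈ Finset.Icc 1 N, sqrtRatio (a i) (b i) z

lemma sqrtPartialProd_sq (a b : ℕ → ℝ) (N : ℕ) (z : ℂ) :
    sqrtPartialProd a b N z ^ 2 = partialProd a b N z := by
  simp only [sqrtPartialProd, partialProd, div_pow, ← Finset.prod_pow, sqrtRatio, principalSqrt_sq,
    moebiusRatio]
  rw [div_eq_mul_inv (_ / _), ← Finset.prod_inv_distrib]
  simp only [inv_div]

lemma tendsto_sqrtPartialProd (a b : ℕ → ℝ) (N : ℕ) :
    Tendsto (sqrtPartialProd a b N) (Bornology.cobounded ℂ) (𝓝 1) := by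
  have h := (tendsto_sqrtRatio (a 0) (b 0)).div
    (tendsto_finsetProd (Finset.Icc 1 N) fun i _ => tendsto_sqrtRatio (a i) (b i)) (by simp)
  rwa [Finset.prod_const_one, div_one] at h

/-- A point of the domain inside one gap avoids every other closed gap. -/
lemma ne_ofReal_of_mem_Icc {a b : ℕ → ℝ}
    (hdisj : ∀ i k, 1 ≤ i → 1 ≤ k → i ≠ k →
      Disjoint (Set.Icc (a i) (b i)) (Set.Icc (a k) (b k)))
    {i j : ℕ} (hi : 1 ≤ i) (hj : 1 ≤ j) (hij : i ≠ j) {x : ℝ} (hx : x ∈ Set.Ioo (a j) (b j)) :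
    ∀ y ∈ Set.Icc (a i) (b i), (x : ℂ) ≠ (y : ℂ) := by
  intro y hy hxy
  obtain rfl : x = y := Complex.ofReal_injective hxy
  exact Set.disjoint_left.1 (hdisj i j hi hj hij) hy (Set.Ioo_subset_Icc_self hx)

lemma sqrtRatio_ne_zero_of_mem_domDN {a b : ℕ → ℝ}
    (hab : ∀ j, a j < b j)
    (hsub : ∀ i, 1 ≤ i → Set.Icc (a i) (b i) ⊆ Set.Ioo (a 0) (b 0))
    (hdisj : ∀ i k, 1 ≤ i → 1 ≤ k → i ≠ k →
      Disjoint (Set.Icc (a i) (b i)) (Set.Icc (a k) (b k)))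
    {N : ℕ} {z : ℂ} (hz : z ∈ domDN a b N) (i : ℕ) : sqrtRatio (a i) (b i) z ≠ 0 := by
  have hl : a i ∈ Set.Icc (a i) (b i) := Set.left_mem_Icc.2 (hab i).le
  have hr : b i ∈ Set.Icc (a i) (b i) := Set.right_mem_Icc.2 (hab i).le
  rcases mem_domDN_cases hz with h | ⟨j, hj, x, hx, rfl⟩
  · have hi : Set.Icc (a i) (b i) ⊆ Set.Icc (a 0) (b 0) := by
      rcases Nat.eq_zero_or_pos i with rfl | hi
      · exact subset_rfl
      · exact (hsub i hi).trans Set.Ioo_subset_Icc_self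
    exact sqrtRatio_ne_zero (h _ (hi hl)) (h _ (hi hr))
  · have hj1 := (Finset.mem_Icc.1 hj).1
    by_cases hij : i = 0 ∨ i = j
    · have hxi : x ∈ Set.Ioo (a i) (b i) := by
        rcases hij with rfl | rfl
        · exact hsub j hj1 (Set.Ioo_subset_Icc_self hx)
        · exact hx
      exact sqrtRatio_ne_zero (by exact_mod_cast hxi.1.ne') (by exact_mod_cast hxi.2.ne)
    · obtain ⟨h0, hij⟩ := not_or.1 hij
      have hne := ne_ofReal_of_mem_Icc hdisj (Nat.one_le_iff_ne_zero.2 h0) hj1 hij hx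
      exact sqrtRatio_ne_zero (hne _ hl) (hne _ hr)

lemma sqrtPartialProd_ne_zero {a b : ℕ → ℝ}
    (hab : ∀ j, a j < b j)
    (hsub : ∀ i, 1 ≤ i → Set.Icc (a i) (b i) ⊆ Set.Ioo (a 0) (b 0))
    (hdisj : ∀ i k, 1 ≤ i → 1 ≤ k → i ≠ k →
      Disjoint (Set.Icc (a i) (b i)) (Set.Icc (a k) (b k)))
    {N : ℕ} {z : ℂ} (hz : z ∈ domDN a b N) : sqrtPartialProd a b N z ≠ 0 :=
  have hne := sqrtRatio_ne_zero_of_mem_domDN hab hsub hdisj hz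
  div_ne_zero (hne 0) (Finset.prod_ne_zero_iff.2 fun i _ => hne i)

lemma differentiableOn_sqrtPartialProd {a b : ℕ → ℝ}
    (hab : ∀ j, a j < b j)
    (hsub : ∀ i, 1 ≤ i → Set.Icc (a i) (b i) ⊆ Set.Ioo (a 0) (b 0))
    (hdisj : ∀ i k, 1 ≤ i → 1 ≤ k → i ≠ k →
      Disjoint (Set.Icc (a i) (b i)) (Set.Icc (a k) (b k)))
    (N : ℕ) : DifferentiableOn ℂ (sqrtPartialProd a b N) (domDN a b N) := by
  intro z hz
  apply DifferentiableAt.differentiableWithinAt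
  have hne := sqrtRatio_ne_zero_of_mem_domDN hab hsub hdisj hz
  have hprod : ∀ s : Finset ℕ, (∀ i ∈ s, DifferentiableAt ℂ (sqrtRatio (a i) (b i)) z) →
      DifferentiableAt ℂ (fun w => ∏ i ∈ s, sqrtRatio (a i) (b i) w) z :=
    fun s hs => DifferentiableAt.fun_finsetProd hs
  rcases mem_domDN_cases hz with h | ⟨j, hj, x, hx, rfl⟩
  · refine (differentiableAt_sqrtRatio (hab 0) h).div (hprod _ fun i hi => ?_)
      (Finset.prod_ne_zero_iff.2 fun i _ => hne i)
    exact differentiableAt_sqrtRatio (hab i) fun y hy =>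
      h y (Set.Ioo_subset_Icc_self (hsub i (Finset.mem_Icc.1 hi).1 hy))
  · have hj1 := (Finset.mem_Icc.1 hj).1
    have hfactor : sqrtPartialProd a b N = fun w =>
        sqrtRatio (a 0) (b 0) w / sqrtRatio (a j) (b j) w /
          ∏ i ∈ (Finset.Icc 1 N).erase j, sqrtRatio (a i) (b i) w := by
      funext w
      rw [sqrtPartialProd, ← Finset.mul_prod_erase _ _ hj, div_div]
    rw [hfactor]
    refine (differentiableAt_sqrtRatio_div (hsub j hj1 (Set.Ioo_subset_Icc_self hx)) hx).fun_div
      (hprod _ fun i hi => ?_) (Finset.prod_ne_zero_iff.2 fun i _ => hne i)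
    obtain ⟨hij, hi⟩ := Finset.mem_erase.1 hi
    exact differentiableAt_sqrtRatio (hab i)
      (ne_ofReal_of_mem_Icc hdisj (Finset.mem_Icc.1 hi).1 hj1 hij hx)

/-- Two continuous square roots of a nonvanishing function on a preconnected neighbourhood of
infinity agree if they have the same nonzero limit at infinity. -/
lemma eqOn_of_sq_eqOn_of_tendsto_cobounded {D : Set ℂ} (hD : IsPreconnected D)
    (hinf : ∀ᶠ z in Bornology.cobounded ℂ, z ∈ D) {g h : ℂ → ℂ} (hg : ContinuousOn g D)
    (hh : ContinuousOn h D) (hsq : ∀ z ∈ D, h z ^ 2 = g z ^ 2) (hne : ∀ z ∈ D, g z ≠ 0)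
    {c : ℂ} (hc : c ≠ 0) (hgc : Tendsto g (Bornology.cobounded ℂ) (𝓝 c))
    (hhc : Tendsto h (Bornology.cobounded ℂ) (𝓝 c)) : Set.EqOn h g D := by
  rcases hD.eq_or_eq_neg_of_sq_eq hh hg hsq (hne _) with heq | heq
  · exact heq
  · have hlim : Tendsto h (Bornology.cobounded ℂ) (𝓝 (-c)) :=
      hgc.neg.congr' (hinf.mono fun z hz => (heq hz).symm)
    exact absurd (self_eq_neg.1 (tendsto_nhds_unique hhc hlim)) hc

/-- for every N ≥ 1 there is a unique holomorphic g₊ on D_N with g₊² = f^N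
and g₊ → 1 at ∞; moreover g₋ = −g₊ is the unique holomorphic square root of f^N on D_N
tending to −1 at ∞. -/
theorem stmt6 (a b : ℕ → ℝ)
    (hab : ∀ j, a j < b j)
    (hsub : ∀ i, 1 ≤ i → Set.Icc (a i) (b i) ⊆ Set.Ioo (a 0) (b 0))
    (hdisj : ∀ i k, 1 ≤ i → 1 ≤ k → i ≠ k →
      Disjoint (Set.Icc (a i) (b i)) (Set.Icc (a k) (b k)))
    (N : ℕ) (hN : 1 ≤ N) :
    ∃ g : ℂ → ℂ,
      (DifferentiableOn ℂ g (domDN a b N) ∧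
        (∀ z ∈ domDN a b N, g z ^ 2 = partialProd a b N z) ∧
        Tendsto g (Bornology.cobounded ℂ) (𝓝 1)) ∧
      (∀ h : ℂ → ℂ, DifferentiableOn ℂ h (domDN a b N) →
        (∀ z ∈ domDN a b N, h z ^ 2 = partialProd a b N z) →
        Tendsto h (Bornology.cobounded ℂ) (𝓝 1) →
        Set.EqOn h g (domDN a b N)) ∧
      (DifferentiableOn ℂ (fun z => -g z) (domDN a b N) ∧
        (∀ z ∈ domDN a b N, (-g z) ^ 2 = partialProd a b N z) ∧
        Tendsto (fun z => -g z) (Bornology.cobounded ℂ) (𝓝 (-1))) ∧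
      (∀ h : ℂ → ℂ, DifferentiableOn ℂ h (domDN a b N) →
        (∀ z ∈ domDN a b N, h z ^ 2 = partialProd a b N z) →
        Tendsto h (Bornology.cobounded ℂ) (𝓝 (-1)) →
        Set.EqOn h (fun z => -g z) (domDN a b N)) := by
  have hdiff := differentiableOn_sqrtPartialProd hab hsub hdisj N
  have hsq := sqrtPartialProd_sq a b N
  have hlim := tendsto_sqrtPartialProd a b N
  have hne : ∀ z ∈ domDN a b N, sqrtPartialProd a b N z ≠ 0 :=
    fun z hz => sqrtPartialProd_ne_zero hab hsub hdisj hz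
  have hconn := isPreconnected_domDN a b N
  have hinf := eventually_mem_domDN a b N
  refine ⟨sqrtPartialProd a b N, ⟨hdiff, fun z _ => hsq z, hlim⟩, fun h hh hh2 hh1 => ?_,
    ⟨hdiff.neg, fun z _ => by rw [neg_sq, hsq], hlim.neg⟩, fun h hh hh2 hh1 => ?_⟩
  · exact eqOn_of_sq_eqOn_of_tendsto_cobounded hconn hinf hdiff.continuousOn hh.continuousOn
      (fun z hz => by rw [hh2 z hz, hsq]) hne one_ne_zero hlim hh1
  · exact eqOn_of_sq_eqOn_of_tendsto_cobounded hconn hinf hdiff.neg.continuousOn hh.continuousOn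
      (fun z hz => by rw [hh2 z hz, neg_sq, hsq])
      (fun z hz => neg_ne_zero.2 (hne z hz)) (neg_ne_zero.2 one_ne_zero) hlim.neg hh1
end

section
/- For every N ≥ 1 there exists a holomorphic function g̃^N_+ on the open set D̃_N = ((ℂ ∖ ℝ) ∪ (a_0, b_0)) ∖ ⋃_{j=1}^N [a_j, b_j] such that (g̃^N_+(z))² = f^N(z) for all z ∈ D̃_N, g̃^N_+(z) → 1 as |z| → ∞ with Im z > 0, and g̃^N_+(z) → −1 as |z| → ∞ with Im z < 0. Moreover g̃^N_+ = g^N_+ on the upper half-plane {Im z > 0} and g̃^N_+ = −g^N_+ on the lower half-plane {Im z < 0}. -/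
open Filter Topology

/-- D̃_N = ((ℂ ∖ ℝ) ∪ (a₀,b₀)) ∖ ⋃_{j=1}^N [a_j,b_j]. -/
noncomputable def domDtildeN (a b : ℕ → ℝ) (N : ℕ) : Set ℂ :=
  ({z : ℂ | z.im ≠ 0} ∪ (fun x : ℝ => (x : ℂ)) '' Set.Ioo (a 0) (b 0)) \
    ((fun x : ℝ => (x : ℂ)) '' ⋃ j ∈ Set.Icc 1 N, Set.Icc (a j) (b j))

section HalfPlaneRoots

/-- The imaginary part of `(z - p) / (z - q)` for real `p`, `q`. -/
lemma im_sub_div_sub_ofReal (p q : ℝ) (z : ℂ) :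
    ((z - p) / (z - q)).im = (p - q) * z.im / Complex.normSq (z - q) := by
  simp only [Complex.div_im, Complex.sub_re, Complex.sub_im, Complex.ofReal_re, Complex.ofReal_im]
  ring

lemma normSq_sub_ofReal_pos {z : ℂ} (hz : z.im ≠ 0) (q : ℝ) : 0 < Complex.normSq (z - q) := by
  refine Complex.normSq_pos.2 fun h => hz ?_
  simpa using congrArg Complex.im h

lemma im_sub_div_sub_ofReal_ne_zero {p q : ℝ} (hpq : p ≠ q) {z : ℂ} (hz : z.im ≠ 0) :
    ((z - p) / (z - q)).im ≠ 0 := by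
  rw [im_sub_div_sub_ofReal]
  exact div_ne_zero (mul_ne_zero (sub_ne_zero.2 hpq) hz) (normSq_sub_ofReal_pos hz q).ne'

lemma I_mul_neg_cpow_of_im_pos {w : ℂ} (hw : 0 < w.im) :
    Complex.I * (-w) ^ (2⁻¹ : ℂ) = w ^ (2⁻¹ : ℂ) := by
  have hw0 : w ≠ 0 := by rintro rfl; simp at hw
  have hlog : Complex.log (-w) = Complex.log w - Real.pi * Complex.I := by
    rw [Complex.log, Complex.log, norm_neg, Complex.arg_neg_eq_arg_sub_pi_of_im_pos hw]
    push_cast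
    ring
  have hI : Complex.exp (-(Real.pi / 2 * Complex.I)) = -Complex.I := by
    rw [Complex.exp_neg, Complex.exp_pi_div_two_mul_I, Complex.inv_I]
  rw [Complex.cpow_def_of_ne_zero (neg_ne_zero.2 hw0), Complex.cpow_def_of_ne_zero hw0, hlog,
    show (Complex.log w - Real.pi * Complex.I) * 2⁻¹ =
      Complex.log w * 2⁻¹ + -(Real.pi / 2 * Complex.I) by ring, Complex.exp_add, hI]
  linear_combination -Complex.exp (Complex.log w * 2⁻¹) * Complex.I_sq

lemma I_mul_neg_cpow_of_im_neg {w : ℂ} (hw : w.im < 0) :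
    Complex.I * (-w) ^ (2⁻¹ : ℂ) = -w ^ (2⁻¹ : ℂ) := by
  have h := I_mul_neg_cpow_of_im_pos (w := -w) (by simpa using hw)
  rw [neg_neg] at h
  rw [← h]
  linear_combination w ^ (2⁻¹ : ℂ) * Complex.I_sq

lemma cpow_two_inv_sq (w : ℂ) : (w ^ (2⁻¹ : ℂ)) ^ 2 = w := by
  simp

/-- The product of the principal square roots of the factors with index `1, …, N`. -/
noncomputable def gapRoot (a b : ℕ → ℝ) (N : ℕ) (z : ℂ) : ℂ :=
  ∏ i ∈ Finset.Icc 1 N, ((z - (a i : ℂ)) / (z - (b i : ℂ))) ^ (2⁻¹ : ℂ)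

/-- The product of the principal square roots of all factors of `partialProd`. -/
noncomputable def principalRoot (a b : ℕ → ℝ) (N : ℕ) (z : ℂ) : ℂ :=
  ((z - (b 0 : ℂ)) / (z - (a 0 : ℂ))) ^ (2⁻¹ : ℂ) * gapRoot a b N z

/-- The square root of `partialProd` that continues through the bands. -/
noncomputable def bandRoot (a b : ℕ → ℝ) (N : ℕ) (z : ℂ) : ℂ :=
  Complex.I * (-((z - (b 0 : ℂ)) / (z - (a 0 : ℂ)))) ^ (2⁻¹ : ℂ) * gapRoot a b N z

variable {a b : ℕ → ℝ} {N : ℕ}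

lemma gapRoot_sq (z : ℂ) :
    gapRoot a b N z ^ 2 = ∏ i ∈ Finset.Icc 1 N, ((z - (a i : ℂ)) / (z - (b i : ℂ))) := by
  rw [gapRoot, ← Finset.prod_pow]
  exact Finset.prod_congr rfl fun i _ => cpow_two_inv_sq _

lemma bandRoot_sq (z : ℂ) : bandRoot a b N z ^ 2 = partialProd a b N z := by
  rw [bandRoot, mul_pow, mul_pow, gapRoot_sq, cpow_two_inv_sq, partialProd, Complex.I_sq]
  ring

lemma bandRoot_eq_of_im_pos (h0 : a 0 < b 0) {z : ℂ} (hz : 0 < z.im) :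
    bandRoot a b N z = principalRoot a b N z := by
  rw [bandRoot, I_mul_neg_cpow_of_im_pos, principalRoot]
  rw [im_sub_div_sub_ofReal]
  exact div_pos (mul_pos (sub_pos.2 h0) hz) (normSq_sub_ofReal_pos hz.ne' _)

lemma bandRoot_eq_of_im_neg (h0 : a 0 < b 0) {z : ℂ} (hz : z.im < 0) :
    bandRoot a b N z = -principalRoot a b N z := by
  rw [bandRoot, I_mul_neg_cpow_of_im_neg, principalRoot, neg_mul]
  rw [im_sub_div_sub_ofReal]
  exact div_neg_of_neg_of_pos (mul_neg_of_pos_of_neg (sub_pos.2 h0) hz)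
    (normSq_sub_ofReal_pos hz.ne _)

lemma tendsto_sub_div_sub_cobounded (p q : ℂ) :
    Tendsto (fun z : ℂ => (z - p) / (z - q)) (Bornology.cobounded ℂ) (𝓝 1) := by
  have hinv : Tendsto (fun z : ℂ => (z - q)⁻¹) (Bornology.cobounded ℂ) (𝓝 0) :=
    tendsto_inv₀_cobounded.comp (tendsto_sub_const_cobounded q)
  have h : Tendsto (fun z : ℂ => 1 + (q - p) * (z - q)⁻¹) (Bornology.cobounded ℂ) (𝓝 1) := by
    simpa using (hinv.const_mul (q - p)).const_add 1
  refine h.congr' ?_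
  filter_upwards [Bornology.isBounded_singleton (x := q)] with z hz
  have : z - q ≠ 0 := sub_ne_zero.2 hz
  field_simp
  ring

lemma tendsto_cpow_sub_div_sub_cobounded (p q : ℂ) :
    Tendsto (fun z : ℂ => ((z - p) / (z - q)) ^ (2⁻¹ : ℂ)) (Bornology.cobounded ℂ) (𝓝 1) := by
  simpa using (tendsto_sub_div_sub_cobounded p q).cpow tendsto_const_nhds
    (Or.inl (by simp : 0 < (1 : ℂ).re))

lemma tendsto_principalRoot_cobounded (a b : ℕ → ℝ) (N : ℕ) :
    Tendsto (principalRoot a b N) (Bornology.cobounded ℂ) (𝓝 1) := by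
  have h : Tendsto (gapRoot a b N) (Bornology.cobounded ℂ) (𝓝 1) := by
    unfold gapRoot
    simpa using tendsto_finsetProd (Finset.Icc 1 N)
      fun i _ => tendsto_cpow_sub_div_sub_cobounded (a i : ℂ) (b i)
  unfold principalRoot
  simpa using (tendsto_cpow_sub_div_sub_cobounded (b 0 : ℂ) (a 0)).mul h

lemma sub_div_sub_mem_slitPlane {p q : ℝ} (hpq : p ≠ q) {z : ℂ}
    (hz : ∀ x : ℝ, (x : ℂ) = z → 0 < (x - p) / (x - q)) :
    (z - p) / (z - q) ∈ Complex.slitPlane := by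
  by_cases him : z.im = 0
  · have hzr : (z.re : ℂ) = z := Complex.ext rfl (by simp [him])
    left
    have := hz z.re hzr
    rw [← hzr]
    exact_mod_cast this
  · exact Or.inr (im_sub_div_sub_ofReal_ne_zero hpq him)

lemma neg_sub_div_sub_mem_slitPlane {p q : ℝ} (hpq : p ≠ q) {z : ℂ}
    (hz : ∀ x : ℝ, (x : ℂ) = z → (x - p) / (x - q) < 0) :
    -((z - p) / (z - q)) ∈ Complex.slitPlane := by
  by_cases him : z.im = 0
  · have hzr : (z.re : ℂ) = z := Complex.ext rfl (by simp [him])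
    left
    have := neg_pos.2 (hz z.re hzr)
    rw [← hzr]
    exact_mod_cast this
  · exact Or.inr (by simpa using im_sub_div_sub_ofReal_ne_zero hpq him)

lemma sub_ofReal_ne_zero {q : ℝ} {z : ℂ} (hz : ∀ x : ℝ, (x : ℂ) = z → x ≠ q) :
    z - q ≠ 0 := fun h => hz q (sub_eq_zero.1 h).symm rfl

lemma differentiableOn_gapRoot (hab : ∀ j, a j < b j) :
    DifferentiableOn ℂ (gapRoot a b N) (domDtildeN a b N) := by
  refine DifferentiableOn.fun_finsetProd fun i hi z hz => ?_
  have hx : ∀ x : ℝ, (x : ℂ) = z → x < a i ∨ b i < x := by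
    rintro x rfl
    by_contra! h
    exact hz.2 ⟨x, Set.mem_iUnion₂.2 ⟨i, Finset.mem_Icc.1 hi, h⟩, rfl⟩
  refine DifferentiableAt.differentiableWithinAt ?_
  refine DifferentiableAt.cpow_const (by
    refine (by fun_prop : DifferentiableAt ℂ _ z).div (by fun_prop) ?_
    exact sub_ofReal_ne_zero fun x h => by
      rcases hx x h with h | h
      · exact (h.trans (hab i)).ne
      · exact h.ne') ?_
  refine sub_div_sub_mem_slitPlane (hab i).ne fun x h => ?_
  rcases hx x h with h | h
  · exact div_pos_of_neg_of_neg (by linarith) (by linarith [hab i])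
  · exact div_pos (by linarith [hab i]) (by linarith)

lemma differentiableOn_bandRoot (hab : ∀ j, a j < b j) :
    DifferentiableOn ℂ (bandRoot a b N) (domDtildeN a b N) := by
  refine DifferentiableOn.mul (fun z hz => ?_) (differentiableOn_gapRoot hab)
  have hx : ∀ x : ℝ, (x : ℂ) = z → a 0 < x ∧ x < b 0 := by
    rintro x rfl
    rcases hz.1 with h | ⟨y, hy, h⟩
    · simp at h
    · rwa [← Complex.ofReal_injective h]
  refine DifferentiableAt.differentiableWithinAt ?_
  refine (DifferentiableAt.cpow_const (DifferentiableAt.neg (by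
    refine (by fun_prop : DifferentiableAt ℂ _ z).div (by fun_prop) ?_
    exact sub_ofReal_ne_zero fun x h => (hx x h).1.ne')) ?_).const_mul _
  refine neg_sub_div_sub_mem_slitPlane (hab 0).ne' fun x h => ?_
  exact div_neg_of_neg_of_pos (sub_neg.2 (hx x h).2) (sub_pos.2 (hx x h).1)

lemma partialProd_ne_zero_of_im_ne_zero {z : ℂ} (hz : z.im ≠ 0) : partialProd a b N z ≠ 0 := by
  have h (q : ℝ) : z - q ≠ 0 := Complex.normSq_pos.1 (normSq_sub_ofReal_pos hz q)
  exact mul_ne_zero (div_ne_zero (h _) (h _))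
    (Finset.prod_ne_zero_iff.2 fun i _ => div_ne_zero (h _) (h _))

/-- Two continuous square roots of `partialProd` on a connected subset of `ℂ ∖ ℝ` agree as soon as
they have the same nonzero limit at infinity along that subset. -/
lemma eqOn_of_sq_eq_partialProd {s : Set ℂ} (hs : IsPreconnected s) (hsim : ∀ z ∈ s, z.im ≠ 0)
    [(Bornology.cobounded ℂ ⊓ 𝓟 s).NeBot] {g h : ℂ → ℂ}
    (hg : ContinuousOn g s) (hh : ContinuousOn h s)
    (hgsq : ∀ z ∈ s, g z ^ 2 = partialProd a b N z)
    (hhsq : ∀ z ∈ s, h z ^ 2 = partialProd a b N z) {c : ℂ} (hc : c ≠ 0)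
    (hglim : Tendsto g (Bornology.cobounded ℂ ⊓ 𝓟 s) (𝓝 c))
    (hhlim : Tendsto h (Bornology.cobounded ℂ ⊓ 𝓟 s) (𝓝 c)) : Set.EqOn g h s := by
  have hne : ∀ {z}, z ∈ s → h z ≠ 0 := fun {z} hz h0 =>
    partialProd_ne_zero_of_im_ne_zero (a := a) (b := b) (N := N) (hsim z hz)
      (by rw [← hhsq z hz, h0]; simp)
  refine (hs.eq_or_eq_neg_of_sq_eq hg hh
    (fun z hz => (hgsq z hz).trans (hhsq z hz).symm) hne).resolve_right fun hneg => ?_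
  have hlim : Tendsto g (Bornology.cobounded ℂ ⊓ 𝓟 s) (𝓝 (-c)) :=
    hhlim.neg.congr' (eventually_inf_principal.2 (.of_forall fun z hz => (hneg hz).symm))
  exact hc (self_eq_neg.1 (tendsto_nhds_unique hglim hlim))

lemma cobounded_inf_principal_neBot_of_ray {s : Set ℂ} {w : ℂ} (hw : w ≠ 0)
    (hs : ∀ t : ℝ, 0 < t → (t : ℂ) * w ∈ s) : (Bornology.cobounded ℂ ⊓ 𝓟 s).NeBot := by
  have h : Tendsto (fun t : ℝ => (t : ℂ) * w) atTop (Bornology.cobounded ℂ ⊓ 𝓟 s) := by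
    refine tendsto_inf.2 ⟨?_, tendsto_principal.2 ?_⟩
    · rw [← tendsto_norm_atTop_iff_cobounded]
      simpa using tendsto_abs_atTop_atTop.atTop_mul_const (norm_pos_iff.2 hw)
    · filter_upwards [eventually_gt_atTop 0] with t ht using hs t ht
  exact h.neBot

lemma mem_domDN_of_im_ne_zero {z : ℂ} (hz : z.im ≠ 0) : z ∈ domDN a b N := by
  rintro ⟨x, _, rfl⟩
  simp at hz

lemma mem_domDtildeN_of_im_ne_zero {z : ℂ} (hz : z.im ≠ 0) : z ∈ domDtildeN a b N := by
  refine ⟨Or.inl hz, ?_⟩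
  rintro ⟨x, _, rfl⟩
  simp at hz

end HalfPlaneRoots

/-- for every N ≥ 1 there is a holomorphic g̃₊ on D̃_N with g̃₊² = f^N,
g̃₊ → 1 at ∞ in the upper half-plane, g̃₊ → −1 at ∞ in the lower half-plane, and
g̃₊ = g₊ on {Im z > 0}, g̃₊ = −g₊ on {Im z < 0}. -/
theorem stmt7 (a b : ℕ → ℝ)
    (hab : ∀ j, a j < b j)
    (hsub : ∀ i, 1 ≤ i → Set.Icc (a i) (b i) ⊆ Set.Ioo (a 0) (b 0))
    (hdisj : ∀ i k, 1 ≤ i → 1 ≤ k → i ≠ k →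
      Disjoint (Set.Icc (a i) (b i)) (Set.Icc (a k) (b k)))
    (N : ℕ) (hN : 1 ≤ N)
    (gplus : ℂ → ℂ)
    (hg : DifferentiableOn ℂ gplus (domDN a b N))
    (hgsq : ∀ z ∈ domDN a b N, gplus z ^ 2 = partialProd a b N z)
    (hglim : Tendsto gplus (Bornology.cobounded ℂ) (𝓝 1)) :
    ∃ gt : ℂ → ℂ,
      DifferentiableOn ℂ gt (domDtildeN a b N) ∧
      (∀ z ∈ domDtildeN a b N, gt z ^ 2 = partialProd a b N z) ∧
      Tendsto gt (Bornology.cobounded ℂ ⊓ 𝓟 {z : ℂ | 0 < z.im}) (𝓝 1) ∧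
      Tendsto gt (Bornology.cobounded ℂ ⊓ 𝓟 {z : ℂ | z.im < 0}) (𝓝 (-1)) ∧
      (∀ z : ℂ, 0 < z.im → gt z = gplus z) ∧
      (∀ z : ℂ, z.im < 0 → gt z = -gplus z) := by
  have hup : ∀ z : ℂ, 0 < z.im → bandRoot a b N z = gplus z := by
    have : (Bornology.cobounded ℂ ⊓ 𝓟 {z : ℂ | 0 < z.im}).NeBot :=
      cobounded_inf_principal_neBot_of_ray Complex.I_ne_zero fun t ht => by simpa using ht
    refine eqOn_of_sq_eq_partialProd (convex_halfSpace_im_gt 0).isPreconnected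
      (fun z hz => ne_of_gt hz)
      ((differentiableOn_bandRoot hab).continuousOn.mono
        fun z hz => mem_domDtildeN_of_im_ne_zero (ne_of_gt hz))
      (hg.continuousOn.mono fun z hz => mem_domDN_of_im_ne_zero (ne_of_gt hz))
      (fun z _ => bandRoot_sq z)
      (fun z hz => hgsq z (mem_domDN_of_im_ne_zero (ne_of_gt hz))) one_ne_zero ?_
      (hglim.mono_left inf_le_left)
    exact ((tendsto_principalRoot_cobounded a b N).mono_left inf_le_left).congr'
      (eventually_inf_principal.2 (.of_forall fun z hz => (bandRoot_eq_of_im_pos (hab 0) hz).symm))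
  have hlow : ∀ z : ℂ, z.im < 0 → bandRoot a b N z = -gplus z := by
    have : (Bornology.cobounded ℂ ⊓ 𝓟 {z : ℂ | z.im < 0}).NeBot :=
      cobounded_inf_principal_neBot_of_ray (neg_ne_zero.2 Complex.I_ne_zero)
        fun t ht => by simpa using ht
    refine eqOn_of_sq_eq_partialProd (h := fun z => -gplus z)
      (convex_halfSpace_im_lt 0).isPreconnected (fun z hz => ne_of_lt hz)
      ((differentiableOn_bandRoot hab).continuousOn.mono
        fun z hz => mem_domDtildeN_of_im_ne_zero (ne_of_lt hz))
      (hg.continuousOn.mono fun z hz => mem_domDN_of_im_ne_zero (ne_of_lt hz)).neg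
      (fun z _ => bandRoot_sq z)
      (fun z hz => by rw [neg_sq, hgsq z (mem_domDN_of_im_ne_zero (ne_of_lt hz))])
      (neg_ne_zero.2 one_ne_zero) ?_ (hglim.neg.mono_left inf_le_left)
    exact ((tendsto_principalRoot_cobounded a b N).neg.mono_left inf_le_left).congr'
      (eventually_inf_principal.2 (.of_forall fun z hz => (bandRoot_eq_of_im_neg (hab 0) hz).symm))
  refine ⟨bandRoot a b N, differentiableOn_bandRoot hab, fun z _ => bandRoot_sq z, ?_, ?_, hup, hlow⟩
  · exact (hglim.mono_left inf_le_left).congr'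
      (eventually_inf_principal.2 (.of_forall fun z hz => (hup z hz).symm))
  · exact (hglim.neg.mono_left inf_le_left).congr'
      (eventually_inf_principal.2 (.of_forall fun z hz => (hlow z hz).symm))
end

section
/- There exists a holomorphic function g̃_+ on ℂ ∖ ℝ such that (g̃_+(z))² = f_{a,b}(z) for all z ∈ ℂ ∖ ℝ and the branches g̃^N_+ converge to g̃_+ uniformly on every compact subset of ℂ ∖ ℝ as N → ∞; moreover g̃_+ = g_+ on the upper half-plane {Im z > 0} and g̃_+ = −g_+ on the lower half-plane {Im z < 0}. -/
open Filter Topology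

open Complex in
lemma im_sub_div_sub (α β : ℝ) (z : ℂ) :
    (((β : ℂ) - z) / (z - α)).im = -z.im * (β - α) / normSq (z - α) := by
  simp only [Complex.div_im, sub_im, ofReal_im, sub_re, ofReal_re]
  ring

lemma sub_real_ne_zero {z : ℂ} (hz : z.im ≠ 0) (α : ℝ) : z - α ≠ 0 := by
  intro h
  apply hz
  simpa using congrArg Complex.im h

lemma gap_ratio_mem_slitPlane {α β : ℝ} (h : α < β) {z : ℂ}
    (hz : z.im ≠ 0 ∨ ∃ x : ℝ, α < x ∧ x < β ∧ z = x) :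
    ((β : ℂ) - z) / (z - α) ∈ Complex.slitPlane := by
  rcases hz with hz | ⟨x, h1, h2, rfl⟩
  · right
    rw [im_sub_div_sub]
    have := Complex.normSq_pos.2 (sub_real_ne_zero hz α)
    have h' : β - α ≠ 0 := by linarith
    exact div_ne_zero (mul_ne_zero (neg_ne_zero.2 hz) h') this.ne'
  · rw [← Complex.ofReal_sub, ← Complex.ofReal_sub, ← Complex.ofReal_div]
    exact Complex.ofReal_mem_slitPlane.2 (div_pos (by linarith) (by linarith))

lemma ratio_mem_slitPlane {α β : ℝ} (h : α < β) {z : ℂ}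
    (hz : z.im ≠ 0 ∨ ∃ x : ℝ, x < α ∧ z = x) :
    (z - (α : ℂ)) / (z - β) ∈ Complex.slitPlane := by
  rcases hz with hz | ⟨x, h1, rfl⟩
  · right
    have key : ((z - (α : ℂ)) / (z - β)).im = - (((α : ℂ) - z) / (z - β)).im := by
      rw [← Complex.neg_im, ← neg_div, neg_sub]
    rw [key, im_sub_div_sub]
    have := Complex.normSq_pos.2 (sub_real_ne_zero hz β)
    have h' : α - β ≠ 0 := by linarith
    apply neg_ne_zero.2
    exact div_ne_zero (mul_ne_zero (neg_ne_zero.2 hz) h') this.ne'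
  · rw [← Complex.ofReal_sub, ← Complex.ofReal_sub, ← Complex.ofReal_div]
    exact Complex.ofReal_mem_slitPlane.2 (div_pos_of_neg_of_neg (by linarith) (by linarith))

/-- A logarithm of `-f^N`, holomorphic across the gap `(a₀, b₀)`. -/
noncomputable def branchLog (a b : ℕ → ℝ) (N : ℕ) (z : ℂ) : ℂ :=
  Complex.log (((b 0 : ℂ) - z) / (z - a 0)) +
    ∑ i ∈ Finset.range N, Complex.log ((z - (a (i + 1) : ℂ)) / (z - b (i + 1)))

/-- The limit of `branchLog a b N` as `N → ∞`. -/
noncomputable def branchLogLim (a b : ℕ → ℝ) (z : ℂ) : ℂ :=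
  Complex.log (((b 0 : ℂ) - z) / (z - a 0)) +
    ∑' i : ℕ, Complex.log ((z - (a (i + 1) : ℂ)) / (z - b (i + 1)))

/-- A square root of `-exp L`. -/
noncomputable def halfExp (L : ℂ) : ℂ := Complex.I * Complex.exp (L / 2)

lemma halfExp_ne_zero (L : ℂ) : halfExp L ≠ 0 :=
  mul_ne_zero Complex.I_ne_zero (Complex.exp_ne_zero _)

lemma halfExp_sq (L : ℂ) : halfExp L ^ 2 = -Complex.exp L := by
  rw [halfExp, mul_pow, Complex.I_sq, ← Complex.exp_nat_mul]
  push_cast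
  ring_nf

lemma differentiable_halfExp : Differentiable ℂ halfExp := by
  unfold halfExp
  fun_prop

lemma halfExp_neg_pi : halfExp (-(Real.pi * Complex.I)) = 1 := by
  rw [halfExp, show -(Real.pi * Complex.I) / 2 = -(Real.pi / 2 * Complex.I) by ring,
    Complex.exp_neg, Complex.exp_pi_div_two_mul_I]
  exact mul_inv_cancel₀ Complex.I_ne_zero

lemma halfExp_pi : halfExp (Real.pi * Complex.I) = -1 := by
  rw [halfExp, show Real.pi * Complex.I / 2 = (Real.pi / 2 * Complex.I) by ring,
    Complex.exp_pi_div_two_mul_I, Complex.I_mul_I]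

lemma exp_branchLog (a b : ℕ → ℝ) (N : ℕ) {z : ℂ}
    (h0 : ((b 0 : ℂ) - z) / (z - a 0) ≠ 0)
    (h : ∀ i < N, (z - (a (i + 1) : ℂ)) / (z - b (i + 1)) ≠ 0) :
    Complex.exp (branchLog a b N z) = -partialProd a b N z := by
  rw [branchLog, partialProd, Complex.exp_add, Complex.exp_log h0, Complex.exp_sum,
    ← neg_mul, ← neg_div, neg_sub]
  congr 1
  rw [Finset.prod_congr rfl fun i hi => Complex.exp_log (h i (Finset.mem_range.1 hi)),
    Finset.range_eq_Ico,
    Finset.prod_Ico_add' (fun i : ℕ => (z - (a i : ℂ)) / (z - b i)) 0 N 1]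
  rfl

lemma halfExp_branchLog_sq (a b : ℕ → ℝ) (N : ℕ) {z : ℂ}
    (h0 : ((b 0 : ℂ) - z) / (z - a 0) ∈ Complex.slitPlane)
    (h : ∀ i < N, (z - (a (i + 1) : ℂ)) / (z - b (i + 1)) ∈ Complex.slitPlane) :
    halfExp (branchLog a b N z) ^ 2 = partialProd a b N z := by
  rw [halfExp_sq, exp_branchLog a b N (Complex.slitPlane_ne_zero h0)
    (fun i hi => Complex.slitPlane_ne_zero (h i hi)), neg_neg]

lemma differentiableAt_branchLog (a b : ℕ → ℝ) (N : ℕ) {z : ℂ}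
    (h0 : ((b 0 : ℂ) - z) / (z - a 0) ∈ Complex.slitPlane)
    (h : ∀ i < N, (z - (a (i + 1) : ℂ)) / (z - b (i + 1)) ∈ Complex.slitPlane) :
    DifferentiableAt ℂ (branchLog a b N) z := by
  have hne {u v : ℂ} (h : u / v ∈ Complex.slitPlane) : v ≠ 0 := by
    rintro rfl
    simp at h
  unfold branchLog
  refine DifferentiableAt.fun_add ?_ (DifferentiableAt.fun_sum fun i hi => ?_)
  · exact DifferentiableAt.clog (.fun_div (by fun_prop) (by fun_prop) (hne h0)) h0
  · have := h i (Finset.mem_range.1 hi)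
    exact DifferentiableAt.clog (.fun_div (by fun_prop) (by fun_prop) (hne this)) this

lemma summable_length_of_disjoint {a b : ℕ → ℝ}
    (hab : ∀ j, a j < b j)
    (hsub : ∀ i, 1 ≤ i → Set.Icc (a i) (b i) ⊆ Set.Ioo (a 0) (b 0))
    (hdisj : ∀ i k, 1 ≤ i → 1 ≤ k → i ≠ k →
      Disjoint (Set.Icc (a i) (b i)) (Set.Icc (a k) (b k))) :
    Summable fun i => b (i + 1) - a (i + 1) := by
  refine summable_of_sum_range_le (c := b 0 - a 0)
    (fun i => (sub_pos.2 (hab _)).le) fun n => ?_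
  have hU : (⋃ i ∈ Finset.range n, Set.Icc (a (i + 1)) (b (i + 1))) ⊆ Set.Ioo (a 0) (b 0) :=
    Set.iUnion₂_subset fun i _ => hsub _ (by omega)
  have hm := MeasureTheory.measure_mono (μ := MeasureTheory.volume) hU
  rw [MeasureTheory.measure_biUnion_finset
    (fun i _ k _ hik => hdisj _ _ (by omega) (by omega) (by omega))
    (fun i _ => measurableSet_Icc)] at hm
  simp only [Real.volume_Icc, Real.volume_Ioo] at hm
  rw [← ENNReal.ofReal_sum_of_nonneg (fun i _ => (sub_pos.2 (hab _)).le),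
    ENNReal.ofReal_le_ofReal_iff (sub_pos.2 (hab 0)).le] at hm
  exact hm

lemma norm_log_ratio_le {α β : ℝ} (h : α < β) {z : ℂ} {d : ℝ} (hd : 0 < d)
    (hz : d ≤ ‖z - β‖) (hd' : (β - α) / d ≤ 1 / 2) :
    ‖Complex.log ((z - (α : ℂ)) / (z - β))‖ ≤ 3 / 2 * ((β - α) / d) := by
  have hne : z - β ≠ 0 := norm_pos_iff.1 (hd.trans_le hz)
  have hw : ‖((β - α : ℝ) : ℂ) / (z - β)‖ ≤ (β - α) / d := by
    rw [norm_div, Complex.norm_real, Real.norm_of_nonneg (sub_pos.2 h).le]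
    exact div_le_div_of_nonneg_left (sub_pos.2 h).le hd hz
  have heq : (z - (α : ℂ)) / (z - β) = 1 + ((β - α : ℝ) : ℂ) / (z - β) := by
    field_simp
    push_cast
    ring
  rw [heq]
  exact (Complex.norm_log_one_add_half_le_self (hw.trans hd')).trans (by gcongr)

lemma tendstoUniformlyOn_sum_log_ratio {a b : ℕ → ℝ} (hab : ∀ j, a j < b j)
    (hsum : Summable fun i => b (i + 1) - a (i + 1)) {K : Set ℂ} {d : ℝ} (hd : 0 < d)
    (hK : ∀ z ∈ K, d ≤ |z.im|) :
    TendstoUniformlyOn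
      (fun N z => ∑ i ∈ Finset.range N, Complex.log ((z - (a (i + 1) : ℂ)) / (z - b (i + 1))))
      (fun z => ∑' i, Complex.log ((z - (a (i + 1) : ℂ)) / (z - b (i + 1)))) atTop K := by
  have hs := hsum.div_const d
  refine tendstoUniformlyOn_tsum_nat_eventually (hs.mul_left (3 / 2)) ?_
  filter_upwards [hs.tendsto_atTop_zero.eventually_le_const (by norm_num : (0 : ℝ) < 1 / 2)]
    with i hi z hz
  refine norm_log_ratio_le (hab _) hd ((hK z hz).trans ?_) hi
  simpa using Complex.abs_im_le_norm (z - b (i + 1))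

lemma tendsto_div_sub_cobounded (c : ℂ) (β : ℂ) :
    Tendsto (fun z : ℂ => c / (z - β)) (Bornology.cobounded ℂ) (𝓝 0) := by
  have h := (tendsto_inv₀_cobounded (α := ℂ)).comp (tendsto_sub_const_cobounded β)
  simpa [div_eq_mul_inv] using h.const_mul c

lemma tendsto_log_ratio_cobounded (α β : ℂ) :
    Tendsto (fun z : ℂ => Complex.log ((z - α) / (z - β))) (Bornology.cobounded ℂ) (𝓝 0) := by
  have h1 : Tendsto (fun z : ℂ => (z - α) / (z - β)) (Bornology.cobounded ℂ) (𝓝 1) := by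
    have h := (tendsto_div_sub_cobounded (β - α) β).const_add 1
    rw [add_zero] at h
    refine h.congr' ?_
    filter_upwards [(tendsto_norm_cobounded_atTop (E := ℂ)).eventually_gt_atTop ‖β‖] with z hz
    have : z - β ≠ 0 := by
      intro h
      rw [sub_eq_zero.1 h] at hz
      exact lt_irrefl _ hz
    field_simp
    ring
  simpa using h1.clog Complex.one_mem_slitPlane

lemma tendsto_tsum_log_ratio_cobounded {a b : ℕ → ℝ} (hab : ∀ j, a j < b j)
    (hsub : ∀ i, 1 ≤ i → Set.Icc (a i) (b i) ⊆ Set.Ioo (a 0) (b 0))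
    (hsum : Summable fun i => b (i + 1) - a (i + 1)) :
    Tendsto (fun z : ℂ => ∑' i : ℕ, Complex.log ((z - (a (i + 1) : ℂ)) / (z - b (i + 1))))
      (Bornology.cobounded ℂ) (𝓝 0) := by
  have hd : 0 < 2 * (b 0 - a 0) := by linarith [hab 0]
  have := tendsto_tsum_of_dominated_convergence (𝓕 := Bornology.cobounded ℂ)
    (f := fun z i => Complex.log ((z - (a (i + 1) : ℂ)) / (z - b (i + 1)))) (g := fun _ => 0)
    ((hsum.div_const (2 * (b 0 - a 0))).mul_left (3 / 2))
    (fun i => tendsto_log_ratio_cobounded _ _) ?_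
  · simpa using this
  filter_upwards [(tendsto_norm_cobounded_atTop (E := ℂ)).eventually_ge_atTop
    (2 * (b 0 - a 0) + (|a 0| + |b 0|))] with z hz i
  have ha := hsub (i + 1) (by omega) (Set.left_mem_Icc.2 (hab _).le)
  have hb := hsub (i + 1) (by omega) (Set.right_mem_Icc.2 (hab _).le)
  refine norm_log_ratio_le (hab _) hd ?_ ?_
  · have h1 := norm_sub_norm_le z (b (i + 1) : ℂ)
    rw [Complex.norm_real, Real.norm_eq_abs] at h1
    have h2 : |b (i + 1)| ≤ |a 0| + |b 0| := by
      rw [abs_le]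
      constructor
      · linarith [neg_abs_le (a 0), abs_nonneg (b 0), hb.1]
      · linarith [le_abs_self (b 0), abs_nonneg (a 0), hb.2]
    linarith
  · rw [div_le_iff₀ hd]
    linarith [ha.1, hb.2]

lemma tendsto_gap_ratio_cobounded (α β : ℝ) :
    Tendsto (fun z : ℂ => ((β : ℂ) - z) / (z - α)) (Bornology.cobounded ℂ) (𝓝 (-1)) := by
  have h := (tendsto_div_sub_cobounded ((β : ℂ) - α) α).const_add (-1)
  rw [add_zero] at h
  refine h.congr' ?_
  filter_upwards [(tendsto_norm_cobounded_atTop (E := ℂ)).eventually_gt_atTop ‖(α : ℂ)‖] with z hz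
  have : z - α ≠ 0 := by
    intro h
    rw [sub_eq_zero.1 h] at hz
    exact lt_irrefl _ hz
  field_simp
  ring

lemma tendsto_log_gap_ratio_upper {α β : ℝ} (h : α < β) :
    Tendsto (fun z : ℂ => Complex.log (((β : ℂ) - z) / (z - α)))
      (Bornology.cobounded ℂ ⊓ 𝓟 {z : ℂ | 0 < z.im}) (𝓝 (-(Real.pi * Complex.I))) := by
  have hl := Complex.tendsto_log_nhdsWithin_im_neg_of_re_neg_of_im_zero (z := -1)
    (by simp) (by simp)
  simp only [norm_neg, norm_one, Real.log_one, Complex.ofReal_zero, zero_sub] at hl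
  refine hl.comp (tendsto_nhdsWithin_iff.2
    ⟨(tendsto_gap_ratio_cobounded α β).mono_left inf_le_left, ?_⟩)
  filter_upwards [mem_inf_of_right (mem_principal_self _)] with z hz
  have hz' : 0 < z.im := hz
  have := Complex.normSq_pos.2 (sub_real_ne_zero hz'.ne' α)
  change Complex.im _ < 0
  rw [im_sub_div_sub]
  exact div_neg_of_neg_of_pos (by nlinarith) this

lemma tendsto_log_gap_ratio_lower {α β : ℝ} (h : α < β) :
    Tendsto (fun z : ℂ => Complex.log (((β : ℂ) - z) / (z - α)))
      (Bornology.cobounded ℂ ⊓ 𝓟 {z : ℂ | z.im < 0}) (𝓝 (Real.pi * Complex.I)) := by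
  have hl := Complex.tendsto_log_nhdsWithin_im_nonneg_of_re_neg_of_im_zero (z := -1)
    (by simp) (by simp)
  simp only [norm_neg, norm_one, Real.log_one, Complex.ofReal_zero, zero_add] at hl
  refine hl.comp (tendsto_nhdsWithin_iff.2
    ⟨(tendsto_gap_ratio_cobounded α β).mono_left inf_le_left, ?_⟩)
  filter_upwards [mem_inf_of_right (mem_principal_self _)] with z hz
  have hz' : z.im < 0 := hz
  have := Complex.normSq_pos.2 (sub_real_ne_zero hz'.ne α)
  change 0 ≤ Complex.im _
  rw [im_sub_div_sub]
  exact (div_pos (by nlinarith) this).le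

lemma neBot_cobounded_upper : NeBot (Bornology.cobounded ℂ ⊓ 𝓟 {z : ℂ | 0 < z.im}) := by
  have h : Tendsto (fun y : ℝ => (y : ℂ) * Complex.I) atTop
      (Bornology.cobounded ℂ ⊓ 𝓟 {z : ℂ | 0 < z.im}) := by
    refine tendsto_inf.2 ⟨tendsto_norm_atTop_iff_cobounded.1 ?_, tendsto_principal.2 ?_⟩
    · simpa using tendsto_abs_atTop_atTop
    · filter_upwards [eventually_gt_atTop 0] with y hy
      simpa using hy
  exact h.neBot

lemma neBot_cobounded_lower : NeBot (Bornology.cobounded ℂ ⊓ 𝓟 {z : ℂ | z.im < 0}) := by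
  have h : Tendsto (fun y : ℝ => (y : ℂ) * -Complex.I) atTop
      (Bornology.cobounded ℂ ⊓ 𝓟 {z : ℂ | z.im < 0}) := by
    refine tendsto_inf.2 ⟨tendsto_norm_atTop_iff_cobounded.1 ?_, tendsto_principal.2 ?_⟩
    · simpa using tendsto_abs_atTop_atTop
    · filter_upwards [eventually_gt_atTop 0] with y hy
      simpa using hy
  exact h.neBot

/-- Two continuous square roots of the same nonvanishing function on a preconnected set agree
if they have the same nonzero limit along some filter containing the set. -/
lemma eqOn_of_sq_eq_of_tendsto {S : Set ℂ} (hS : IsPreconnected S) {F G : ℂ → ℂ}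
    (hF : ContinuousOn F S) (hG : ContinuousOn G S) (hsq : ∀ z ∈ S, F z ^ 2 = G z ^ 2)
    (hG0 : ∀ z ∈ S, G z ≠ 0) {l : Filter ℂ} [NeBot l] (hSl : S ∈ l) {c : ℂ} (hc : c ≠ 0)
    (hFl : Tendsto F l (𝓝 c)) (hGl : Tendsto G l (𝓝 c)) : Set.EqOn F G S := by
  refine (hS.eq_or_eq_neg_of_sq_eq hF hG hsq fun {z} hz => hG0 z hz).resolve_right fun h => ?_
  have h1 : Tendsto F l (𝓝 (-c)) := hGl.neg.congr' (by
    filter_upwards [hSl] with z hz using (h hz).symm)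
  exact hc (self_eq_neg.1 (tendsto_nhds_unique hFl h1))

lemma isPreconnected_nonreal_union_singleton (x : ℝ) :
    IsPreconnected ({z : ℂ | z.im ≠ 0} ∪ {(x : ℂ)}) := by
  have : StarConvex ℝ (x : ℂ) ({z : ℂ | z.im ≠ 0} ∪ {(x : ℂ)}) := by
    rw [starConvex_iff_forall_pos (by simp)]
    rintro z (hz | hz) s t hs ht hst
    · left
      have hz' : z.im ≠ 0 := hz
      simpa using ⟨ht.ne', hz'⟩
    · right
      rw [Set.mem_singleton_iff.1 hz, ← add_smul, hst, one_smul]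
      rfl
  exact (this.isPathConnected (by simp)).isConnected.isPreconnected

lemma exists_gap_point {a b : ℕ → ℝ} (hab : ∀ j, a j < b j)
    (hsub : ∀ i, 1 ≤ i → Set.Icc (a i) (b i) ⊆ Set.Ioo (a 0) (b 0)) (N : ℕ) :
    ∃ x, a 0 < x ∧ x < b 0 ∧ ∀ i ∈ Set.Icc 1 N, x < a i := by
  have h1 : ∀ᶠ x in 𝓝[>] (a 0), ∀ i ∈ Set.Icc 1 N, x < a i :=
    (Filter.eventually_all_finite (Set.finite_Icc 1 N)).2 fun i hi =>
      mem_nhdsWithin_of_mem_nhds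
        (Iio_mem_nhds (hsub i hi.1 (Set.left_mem_Icc.2 (hab i).le)).1)
  have h2 : ∀ᶠ x in 𝓝[>] (a 0), x < b 0 := mem_nhdsWithin_of_mem_nhds (Iio_mem_nhds (hab 0))
  obtain ⟨x, ⟨h, hxb⟩, hx⟩ := ((h1.and h2).and self_mem_nhdsWithin).exists
  exact ⟨x, hx, hxb, h⟩

/-- The branch of `√f^N` on `D̃_N` is given by `halfExp ∘ branchLog` off the real axis. -/
lemma branch_eq_halfExp_branchLog {a b : ℕ → ℝ} (hab : ∀ j, a j < b j)
    (hsub : ∀ i, 1 ≤ i → Set.Icc (a i) (b i) ⊆ Set.Ioo (a 0) (b 0)) {N : ℕ} {g : ℂ → ℂ}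
    (hg : ContinuousOn g (domDtildeN a b N))
    (hgsq : ∀ z ∈ domDtildeN a b N, g z ^ 2 = partialProd a b N z)
    (hlim : Tendsto g (Bornology.cobounded ℂ ⊓ 𝓟 {z : ℂ | 0 < z.im}) (𝓝 1)) :
    ∀ z : ℂ, z.im ≠ 0 → g z = halfExp (branchLog a b N z) := by
  obtain ⟨x, hx1, hx2, hx⟩ := exists_gap_point hab hsub N
  have hS : {z : ℂ | z.im ≠ 0} ∪ {(x : ℂ)} ⊆ domDtildeN a b N := by
    rintro z (hz | hz)
    · refine ⟨Or.inl hz, ?_⟩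
      rintro ⟨y, -, rfl⟩
      exact hz (Complex.ofReal_im y)
    · rw [Set.mem_singleton_iff.1 hz]
      refine ⟨Or.inr ⟨x, ⟨hx1, hx2⟩, rfl⟩, ?_⟩
      rintro ⟨y, hy, hyx⟩
      obtain ⟨j, hj, hyj⟩ := Set.mem_iUnion₂.1 hy
      rw [Complex.ofReal_injective hyx] at hyj
      exact (hx j hj).not_ge hyj.1
  have h0 : ∀ z ∈ {z : ℂ | z.im ≠ 0} ∪ {(x : ℂ)},
      ((b 0 : ℂ) - z) / (z - a 0) ∈ Complex.slitPlane := fun z hz =>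
    gap_ratio_mem_slitPlane (hab 0) (hz.imp id fun h => ⟨x, hx1, hx2, h⟩)
  have hi : ∀ z ∈ {z : ℂ | z.im ≠ 0} ∪ {(x : ℂ)}, ∀ i < N,
      (z - (a (i + 1) : ℂ)) / (z - b (i + 1)) ∈ Complex.slitPlane := fun z hz i hi =>
    ratio_mem_slitPlane (hab _) (hz.imp id fun h => ⟨x, hx _ ⟨by omega, by omega⟩, h⟩)
  have := neBot_cobounded_upper
  have hL : Tendsto (fun z => halfExp (branchLog a b N z))
      (Bornology.cobounded ℂ ⊓ 𝓟 {z : ℂ | 0 < z.im}) (𝓝 1) := by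
    have h2 := tendsto_finsetSum (Finset.range N) fun i _ =>
      (tendsto_log_ratio_cobounded (a (i + 1)) (b (i + 1))).mono_left
        (inf_le_left (b := 𝓟 {z : ℂ | 0 < z.im}))
    have h3 := (tendsto_log_gap_ratio_upper (hab 0)).add h2
    rw [Finset.sum_const_zero, add_zero] at h3
    rw [← halfExp_neg_pi]
    exact (differentiable_halfExp.continuous.tendsto _).comp h3
  intro z hz
  refine eqOn_of_sq_eq_of_tendsto (isPreconnected_nonreal_union_singleton x) (hg.mono hS)
    (fun w hw => (differentiable_halfExp.continuous.continuousAt.comp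
      (differentiableAt_branchLog a b N (h0 w hw) (hi w hw)).continuousAt).continuousWithinAt)
    (fun w hw => ?_) (fun w _ => halfExp_ne_zero _)
    (mem_inf_of_right ?_) one_ne_zero hlim hL (Or.inl hz)
  · exact (hgsq w (hS hw)).trans (halfExp_branchLog_sq a b N (h0 w hw) (hi w hw)).symm
  · exact fun w (hw : 0 < w.im) => Or.inl hw.ne'

lemma tendstoUniformlyOn_branchLog {a b : ℕ → ℝ} (hab : ∀ j, a j < b j)
    (hsum : Summable fun i => b (i + 1) - a (i + 1)) {K : Set ℂ} (hK : IsCompact K)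
    (hKs : K ⊆ {z : ℂ | z.im ≠ 0}) :
    TendstoUniformlyOn (branchLog a b) (branchLogLim a b) atTop K := by
  obtain ⟨d, hd, hKd⟩ : ∃ d > 0, ∀ z ∈ K, d ≤ |z.im| :=
    hK.exists_forall_le' (a := 0) (f := fun z : ℂ => |z.im|)
      (Complex.continuous_im.abs.continuousOn) (fun z hz => abs_pos.2 (hKs hz))
  have h := tendstoUniformlyOn_sum_log_ratio hab hsum hd hKd
  rw [Metric.tendstoUniformlyOn_iff] at h ⊢
  simpa only [branchLog, branchLogLim, dist_add_left] using h

lemma tendstoUniformlyOn_halfExp_branchLog {a b : ℕ → ℝ} (hab : ∀ j, a j < b j)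
    (hsum : Summable fun i => b (i + 1) - a (i + 1)) {K : Set ℂ} (hK : IsCompact K)
    (hKs : K ⊆ {z : ℂ | z.im ≠ 0}) :
    TendstoUniformlyOn (fun N z => halfExp (branchLog a b N z))
      (fun z => halfExp (branchLogLim a b z)) atTop K := by
  have h := tendstoUniformlyOn_branchLog hab hsum hK hKs
  have hcont : ∀ N, ContinuousOn (branchLog a b N) K := fun N z hz =>
    (differentiableAt_branchLog a b N (gap_ratio_mem_slitPlane (hab 0) (Or.inl (hKs hz)))
      fun i _ => ratio_mem_slitPlane (hab _) (Or.inl (hKs hz))).continuousAt.continuousWithinAt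
  have hlim : ContinuousOn (branchLogLim a b) K := h.continuousOn (.of_forall hcont)
  have h2 : TendstoUniformlyOn (fun N z => branchLog a b N z / 2)
      (fun z => branchLogLim a b z / 2) atTop K :=
    (uniformContinuous_div_const' (2 : ℂ)).comp_tendstoUniformlyOn h
  have h3 := h2.comp_cexp (hK.image_of_continuousOn
    (Complex.continuous_re.comp_continuousOn (hlim.div_const 2))).bddAbove
  have hmul : UniformContinuous fun w : ℂ => Complex.I * w :=
    uniformContinuous_const_smul Complex.I
  exact hmul.comp_tendstoUniformlyOn h3

lemma tendsto_halfExp_branchLogLim {a b : ℕ → ℝ} (hab : ∀ j, a j < b j)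
    (hsub : ∀ i, 1 ≤ i → Set.Icc (a i) (b i) ⊆ Set.Ioo (a 0) (b 0))
    (hsum : Summable fun i => b (i + 1) - a (i + 1)) {s : Set ℂ} {c : ℂ}
    (hc : Tendsto (fun z : ℂ => Complex.log (((b 0 : ℂ) - z) / (z - a 0)))
      (Bornology.cobounded ℂ ⊓ 𝓟 s) (𝓝 c)) :
    Tendsto (fun z => halfExp (branchLogLim a b z)) (Bornology.cobounded ℂ ⊓ 𝓟 s)
      (𝓝 (halfExp c)) := by
  have h := hc.add ((tendsto_tsum_log_ratio_cobounded hab hsub hsum).mono_left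
    (inf_le_left (b := 𝓟 s)))
  rw [add_zero] at h
  exact (differentiable_halfExp.continuous.tendsto _).comp h

lemma notMem_cantorAB_of_im_ne_zero (a b : ℕ → ℝ) {z : ℂ} (hz : z.im ≠ 0) :
    z ∉ cantorAB a b := by
  rintro ⟨x, -, rfl⟩
  exact hz (Complex.ofReal_im x)

/-- there is a holomorphic g̃₊ on ℂ ∖ ℝ with g̃₊² = f_{a,b}, the branches
g̃^N₊ converging to g̃₊ uniformly on compact subsets of ℂ ∖ ℝ; moreover g̃₊ = g₊ on the
upper half-plane and g̃₊ = −g₊ on the lower half-plane. -/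
theorem stmt9 (a b : ℕ → ℝ)
    (hab : ∀ j, a j < b j)
    (hsub : ∀ i, 1 ≤ i → Set.Icc (a i) (b i) ⊆ Set.Ioo (a 0) (b 0))
    (hdisj : ∀ i k, 1 ≤ i → 1 ≤ k → i ≠ k →
      Disjoint (Set.Icc (a i) (b i)) (Set.Icc (a k) (b k)))
    (f : ℂ → ℂ)
    (hf : ∀ z ∉ cantorAB a b,
      Tendsto (fun N => partialProd a b N z) atTop (𝓝 (f z)))
    (hfdiff : DifferentiableOn ℂ f (cantorAB a b)ᶜ)
    (gplus : ℂ → ℂ)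
    (hgdiff : DifferentiableOn ℂ gplus (cantorAB a b)ᶜ)
    (hgsq : ∀ z ∉ cantorAB a b, gplus z ^ 2 = f z)
    (hglim : Tendsto gplus (Bornology.cobounded ℂ) (𝓝 1))
    (gtN : ℕ → ℂ → ℂ)
    (hgtN : ∀ N, 1 ≤ N →
      DifferentiableOn ℂ (gtN N) (domDtildeN a b N) ∧
      (∀ z ∈ domDtildeN a b N, gtN N z ^ 2 = partialProd a b N z) ∧
      Tendsto (gtN N) (Bornology.cobounded ℂ ⊓ 𝓟 {z : ℂ | 0 < z.im}) (𝓝 1)) :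
    ∃ gt : ℂ → ℂ,
      DifferentiableOn ℂ gt {z : ℂ | z.im ≠ 0} ∧
      (∀ z : ℂ, z.im ≠ 0 → gt z ^ 2 = f z) ∧
      (∀ K : Set ℂ, IsCompact K → K ⊆ {z : ℂ | z.im ≠ 0} →
        TendstoUniformlyOn (fun N z => gtN N z) gt atTop K) ∧
      (∀ z : ℂ, 0 < z.im → gt z = gplus z) ∧
      (∀ z : ℂ, z.im < 0 → gt z = -gplus z) := by
  have hsum := summable_length_of_disjoint hab hsub hdisj
  have hopen : IsOpen {z : ℂ | z.im ≠ 0} := isOpen_ne_fun Complex.continuous_im continuous_const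
  have hunif : ∀ K : Set ℂ, IsCompact K → K ⊆ {z : ℂ | z.im ≠ 0} →
      TendstoUniformlyOn (fun N z => halfExp (branchLog a b N z))
        (fun z => halfExp (branchLogLim a b z)) atTop K := fun K hK hKs =>
    tendstoUniformlyOn_halfExp_branchLog hab hsum hK hKs
  have hdiff : DifferentiableOn ℂ (fun z => halfExp (branchLogLim a b z)) {z : ℂ | z.im ≠ 0} := by
    refine ((tendstoLocallyUniformlyOn_iff_forall_isCompact hopen).2
      fun K hKs hK => hunif K hK hKs).differentiableOn (.of_forall fun N z hz => ?_) hopen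
    exact (differentiable_halfExp.differentiableAt.comp z (differentiableAt_branchLog a b N
      (gap_ratio_mem_slitPlane (hab 0) (Or.inl hz))
      fun i _ => ratio_mem_slitPlane (hab _) (Or.inl hz))).differentiableWithinAt
  have hsq : ∀ z : ℂ, z.im ≠ 0 → halfExp (branchLogLim a b z) ^ 2 = f z := fun z hz => by
    have h1 := ((hunif {z} isCompact_singleton (Set.singleton_subset_iff.2 hz)).tendsto_at
      (Set.mem_singleton z)).pow 2
    refine tendsto_nhds_unique (h1.congr fun N => ?_)
      (hf z (notMem_cantorAB_of_im_ne_zero a b hz))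
    exact halfExp_branchLog_sq a b N (gap_ratio_mem_slitPlane (hab 0) (Or.inl hz))
      fun i _ => ratio_mem_slitPlane (hab _) (Or.inl hz)
  have hgcont : ContinuousOn gplus {z : ℂ | z.im ≠ 0} :=
    hgdiff.continuousOn.mono fun z hz => notMem_cantorAB_of_im_ne_zero a b hz
  refine ⟨fun z => halfExp (branchLogLim a b z), hdiff, hsq, fun K hK hKs => ?_, ?_, ?_⟩
  · refine (hunif K hK hKs).congr ?_
    filter_upwards [eventually_ge_atTop 1] with N hN z hz
    obtain ⟨h1, h2, h3⟩ := hgtN N hN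
    exact (branch_eq_halfExp_branchLog hab hsub h1.continuousOn h2 h3 z (hKs hz)).symm
  · have := neBot_cobounded_upper
    have hs : {z : ℂ | 0 < z.im} ⊆ {z : ℂ | z.im ≠ 0} := fun z hz => ne_of_gt hz
    have hlim := tendsto_halfExp_branchLogLim hab hsub hsum (tendsto_log_gap_ratio_upper (hab 0))
    rw [halfExp_neg_pi] at hlim
    intro z hz
    exact (eqOn_of_sq_eq_of_tendsto (convex_halfSpace_im_gt 0).isPreconnected (hgcont.mono hs)
      (hdiff.continuousOn.mono hs)
      (fun w hw => (hgsq w (notMem_cantorAB_of_im_ne_zero a b (hs hw))).trans (hsq w (hs hw)).symm)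
      (fun w _ => halfExp_ne_zero _) (mem_inf_of_right (mem_principal_self _)) one_ne_zero
      (hglim.mono_left inf_le_left) hlim hz).symm
  · have := neBot_cobounded_lower
    have hs : {z : ℂ | z.im < 0} ⊆ {z : ℂ | z.im ≠ 0} := fun z hz => ne_of_lt hz
    have hlim := tendsto_halfExp_branchLogLim hab hsub hsum (tendsto_log_gap_ratio_lower (hab 0))
    rw [halfExp_pi] at hlim
    intro z hz
    exact (eqOn_of_sq_eq_of_tendsto (convex_halfSpace_im_lt 0).isPreconnected
      (hgcont.mono hs).neg (hdiff.continuousOn.mono hs)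
      (fun w hw => (neg_sq (gplus w)).trans
        ((hgsq w (notMem_cantorAB_of_im_ne_zero a b (hs hw))).trans (hsq w (hs hw)).symm))
      (fun w _ => halfExp_ne_zero _) (mem_inf_of_right (mem_principal_self _))
      (neg_ne_zero.2 one_ne_zero) (hglim.mono_left inf_le_left).neg hlim hz).symm
end

section
/- The open set D = ℂ ∖ 𝒞(a,b) is connected, and the only holomorphic functions h on D satisfying h(z)² = f_{a,b}(z) for all z ∈ D are h = g_+ and h = −g_+; in particular the maximal analytic continuation of g_+ is single-valued on D. -/
open Filter Topology

/-- The complement of the set `cantorAB a b` is connected: it is the union of the parts lying in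
the two closed half-planes, each squeezed between an open half-plane and its closure. -/
theorem isConnected_compl_cantorAB (a b : ℕ → ℝ) : IsConnected (cantorAB a b)ᶜ := by
  have him : ∀ z ∈ cantorAB a b, z.im = 0 := by
    rintro _ ⟨x, -, rfl⟩
    exact Complex.ofReal_im x
  have hpt : ((b 0 + 1 : ℝ) : ℂ) ∈ (cantorAB a b)ᶜ := by
    rintro ⟨x, ⟨hx, -⟩, hxb⟩
    have : x = b 0 + 1 := Complex.ofReal_injective hxb
    linarith [hx.2]
  have hup : IsPreconnected ((cantorAB a b)ᶜ ∩ {z | 0 ≤ z.im}) := by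
    refine (convex_halfSpace_im_gt 0).isPreconnected.subset_closure ?_ ?_
    · exact fun z (hz : 0 < z.im) => ⟨fun hC => hz.ne (him z hC).symm, le_of_lt hz⟩
    · rw [Complex.closure_setOfPred_lt_im]
      exact Set.inter_subset_right
  have hlow : IsPreconnected ((cantorAB a b)ᶜ ∩ {z | z.im ≤ 0}) := by
    refine (convex_halfSpace_im_lt 0).isPreconnected.subset_closure ?_ ?_
    · exact fun z (hz : z.im < 0) => ⟨fun hC => hz.ne (him z hC), le_of_lt hz⟩
    · rw [Complex.closure_setOfPred_im_lt]
      exact Set.inter_subset_right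
  have hunion : (cantorAB a b)ᶜ =
      ((cantorAB a b)ᶜ ∩ {z | 0 ≤ z.im}) ∪ ((cantorAB a b)ᶜ ∩ {z | z.im ≤ 0}) := by
    rw [← Set.inter_union_distrib_left, eq_comm, Set.inter_eq_left]
    exact fun z _ => le_total 0 z.im
  refine ⟨⟨_, hpt⟩, ?_⟩
  rw [hunion]
  exact hup.union _ ⟨hpt, (Complex.ofReal_im _).ge⟩ ⟨hpt, (Complex.ofReal_im _).le⟩ hlow

/-- D = ℂ ∖ 𝒞(a,b) is connected, and the only holomorphic square roots of
f_{a,b} on D are g₊ and −g₊. -/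
theorem stmt10 (a b : ℕ → ℝ)
    (hab : ∀ j, a j < b j)
    (hsub : ∀ i, 1 ≤ i → Set.Icc (a i) (b i) ⊆ Set.Ioo (a 0) (b 0))
    (hdisj : ∀ i k, 1 ≤ i → 1 ≤ k → i ≠ k →
      Disjoint (Set.Icc (a i) (b i)) (Set.Icc (a k) (b k)))
    (f : ℂ → ℂ)
    (hf : ∀ z ∉ cantorAB a b,
      Tendsto (fun N => partialProd a b N z) atTop (𝓝 (f z)))
    (hfdiff : DifferentiableOn ℂ f (cantorAB a b)ᶜ)
    (hfne : ∀ z ∉ cantorAB a b, f z ≠ 0)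
    (gplus : ℂ → ℂ)
    (hgdiff : DifferentiableOn ℂ gplus (cantorAB a b)ᶜ)
    (hgsq : ∀ z ∉ cantorAB a b, gplus z ^ 2 = f z)
    (hglim : Tendsto gplus (Bornology.cobounded ℂ) (𝓝 1)) :
    IsConnected ((cantorAB a b)ᶜ) ∧
    ∀ h : ℂ → ℂ, DifferentiableOn ℂ h (cantorAB a b)ᶜ →
      (∀ z ∉ cantorAB a b, h z ^ 2 = f z) →
      (Set.EqOn h gplus (cantorAB a b)ᶜ ∨
        Set.EqOn h (fun z => -gplus z) (cantorAB a b)ᶜ) := by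
  have hconn := isConnected_compl_cantorAB a b
  refine ⟨hconn, fun h hhdiff hhsq => ?_⟩
  refine hconn.isPreconnected.eq_or_eq_neg_of_sq_eq hhdiff.continuousOn hgdiff.continuousOn
    (fun z hz => (hhsq z hz).trans (hgsq z hz).symm) fun {z} hz hg => hfne z hz ?_
  rw [← hgsq z hz, hg, zero_pow two_ne_zero]
end
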